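/- arXiv:1810.03850 — 3 statements merged into one kernel-verified Lean document; each statement's English description precedes it below -/
import Mathlib

section
/- Let α ∈ (0,|s|), Λ > 1, K ≥ 1 and m, r ∈ ℕ. Then there exists a constant C > 0, depending only on d, s, α, Λ, K, m and r (in particular independent of ε, θ and the points), such that for every ε ∈ (0,1), every centered jointly Gaussian random field (Φ_ε(x))_{x∈ℝ^d} whose covariance (x,y) ↦ E(Φ_ε(x)Φ_ε(y)) satisfies the standing covariance bound with parameters (α, Λ, ε), every θ ∈ ℝ and all points x₁, …, x_K ∈ ℝ^d, one has |E ∏_{j=1}^{K} ∂_θ^r 𝓗_m(e^{iθΦ_ε(x_j)})| ≤ C · E ∏_{j=1}^{K} (Φ_ε(x_j)^{⋄m} + Φ_ε(x_j)^{⋄(m+1)}), where |·| on the left is the complex modulus. -/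
open MeasureTheory ProbabilityTheory Filter

noncomputable section

def anorm {d : ℕ} (s : Fin d → ℝ) (x : Fin d → ℝ) : ℝ :=
  ∑ j, |x j| ^ (1 / s j)

def CovBound {d : ℕ} (s : Fin d → ℝ) (α Λ ε : ℝ)
    (R : (Fin d → ℝ) → (Fin d → ℝ) → ℝ) : Prop :=
  ∀ x y, ε ^ α / (Λ * (anorm s (x - y) + ε) ^ α) ≤ R x y ∧
    R x y ≤ Λ * ε ^ α / (anorm s (x - y) + ε) ^ α

/-- A family of real random variables is centered jointly Gaussian if every finite real
linear combination of its members is a centered Gaussian random variable. -/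
def IsCenteredGaussianFamily {Ω ι : Type*} [MeasurableSpace Ω] (P : Measure Ω)
    (X : ι → Ω → ℝ) : Prop :=
  ∀ (A : Finset ι) (c : ι → ℝ), ∃ v : NNReal,
    Measure.map (fun ω => ∑ i ∈ A, c i * X i ω) P = gaussianReal 0 v

/-- Wick power `X^{⋄n} = σⁿ Heₙ(X/σ)` of a centered Gaussian of variance `v = σ²`. -/
def wick (v : ℝ) (n : ℕ) (x : ℝ) : ℝ :=
  Real.sqrt v ^ n * Polynomial.aeval (x / Real.sqrt v) (Polynomial.hermite n)

/-- `𝓗_m(e^{iθx})` for a centered Gaussian of variance `a`: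
`e^{iθx} − Σ_{n<m} (iⁿ/n!) θⁿ e^{−aθ²/2} x^{⋄n}`. -/
def hFun (m : ℕ) (θ x a : ℝ) : ℂ :=
  Complex.exp (Complex.I * θ * x) -
    ∑ n ∈ Finset.range m, (Complex.I ^ n / (n.factorial : ℂ)) * (θ : ℂ) ^ n *
      Complex.exp (((-(a * θ ^ 2) / 2 : ℝ) : ℂ)) * ((wick a n x : ℝ) : ℂ)

/-- Number of endpoints of the edge `e` equal to the vertex `j`. -/
def endpointCount {V : Type*} [DecidableEq V] (e : V × V) (j : V) : ℕ :=
  (if e.1 = j then 1 else 0) + (if e.2 = j then 1 else 0)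

/-- Degree of the vertex `j` in the multigraph with edge multiplicities `n`. -/
def degree {V : Type*} [Fintype V] [DecidableEq V] (n : V × V → ℕ) (j : V) : ℕ :=
  ∑ e, n e * endpointCount e j

/-- A list of edges in which every vertex has degree at least `m` can be replaced by one in
which all degrees are `m` or `m + 1`, at the cost of a multiplicative constant in the product
of the edge weights, as soon as the weights satisfy a multiplicative triangle inequality. -/
lemma exists_edges_of_degree_ge {V : Type*} [DecidableEq V] (W : V × V → ℝ) {C : ℝ} (hC : 1 ≤ C)
    (m : ℕ) (hsymm : ∀ a b, W (a, b) = W (b, a)) (hnn : ∀ e, 0 ≤ W e) (hle : ∀ e, W e ≤ C)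
    (htri : ∀ v a b, a ≠ b → W (v, a) * W (v, b) ≤ C * W (a, b)) (S : Multiset (V × V))
    (hS : ∀ e ∈ S, e.1 ≠ e.2) (hdeg : ∀ j, m ≤ (S.map (endpointCount · j)).sum) :
    ∃ T : Multiset (V × V), (∀ e ∈ T, e.1 ≠ e.2) ∧
      (∀ j, m ≤ (T.map (endpointCount · j)).sum ∧ (T.map (endpointCount · j)).sum ≤ m + 1) ∧
      (S.map W).prod ≤ C ^ Multiset.card S * (T.map W).prod := by
  induction hN : Multiset.card S using Nat.strong_induction_on generalizing S with
  | _ N ih =>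
  have hprod (T : Multiset (V × V)) : 0 ≤ (T.map W).prod := by
    refine Multiset.prod_nonneg fun a ha => ?_
    obtain ⟨e, -, rfl⟩ := Multiset.mem_map.1 ha
    exact hnn e
  subst hN
  by_cases h : ∀ j, (S.map (endpointCount · j)).sum ≤ m + 1
  · exact ⟨S, hS, fun j => ⟨hdeg j, h j⟩,
      le_mul_of_one_le_left (hprod S) (one_le_pow₀ hC)⟩
  push Not at h
  obtain ⟨v, hv⟩ := h
  have hother : ∀ e ∈ S, endpointCount e v ≠ 0 → ∃ a, a ≠ v ∧ W e = W (v, a) ∧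
      ∀ j, endpointCount e j = (if v = j then 1 else 0) + (if a = j then 1 else 0) := by
    rintro ⟨p, q⟩ he hev
    have hpq := hS _ he
    by_cases hp : p = v
    · subst hp
      exact ⟨q, fun h => hpq h.symm, rfl, fun j => rfl⟩
    · have hq : q = v := by
        by_contra hq
        exact hev (by simp [endpointCount, hp, hq])
      subst hq
      exact ⟨p, hp, hsymm _ _, fun j => by simp only [endpointCount]; ring⟩
  by_cases hab : ∃ e ∈ S, ∃ f ∈ S, ∃ a b, a ≠ b ∧ a ≠ v ∧ b ≠ v ∧
      W e = W (v, a) ∧ W f = W (v, b) ∧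
      (∀ j, endpointCount e j = (if v = j then 1 else 0) + (if a = j then 1 else 0)) ∧
      (∀ j, endpointCount f j = (if v = j then 1 else 0) + (if b = j then 1 else 0))
  · obtain ⟨e, he, f, hf, a, b, hne, hav, hbv, hWe, hWf, hce, hcf⟩ := hab
    have hef : f ≠ e := by
      rintro rfl
      have h1 := hce a
      have h2 := hcf a
      simp [hne.symm] at h1 h2
      omega
    obtain ⟨S₁, rfl⟩ := Multiset.exists_cons_of_mem he
    have hf1 : f ∈ S₁ := by
      rcases Multiset.mem_cons.1 hf with h | h
      · exact absurd h hef
      · exact h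
    obtain ⟨S₂, rfl⟩ := Multiset.exists_cons_of_mem hf1
    have hdeg' (j : V) : m ≤ (((a, b) ::ₘ S₂).map (endpointCount · j)).sum := by
      have h1 := hdeg j
      simp only [Multiset.map_cons, Multiset.sum_cons] at h1 hv ⊢
      rw [hce, hcf] at h1 hv
      rw [show endpointCount (a, b) j = (if a = j then 1 else 0) + (if b = j then 1 else 0) from rfl]
      by_cases hj : v = j
      · subst hj
        simp [hav, hbv] at hv h1 ⊢
        omega
      · simp only [hj, if_false] at h1
        omega
    obtain ⟨T, hT1, hT2, hT3⟩ := ih (Multiset.card ((a, b) ::ₘ S₂)) (by simp) ((a, b) ::ₘ S₂)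
      (by
        intro e' he'
        rcases Multiset.mem_cons.1 he' with h | h
        · subst h; exact hne
        · exact hS _ (by simp [h])) hdeg' rfl
    refine ⟨T, hT1, hT2, ?_⟩
    simp only [Multiset.map_cons, Multiset.prod_cons, Multiset.card_cons] at hT3 ⊢
    calc W e * (W f * (S₂.map W).prod) = (W (v, a) * W (v, b)) * (S₂.map W).prod := by
          rw [hWe, hWf]; ring
      _ ≤ (C * W (a, b)) * (S₂.map W).prod := by
          exact mul_le_mul_of_nonneg_right (htri _ _ _ hne) (hprod _)
      _ = C * (W (a, b) * (S₂.map W).prod) := by ring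
      _ ≤ C * (C ^ (Multiset.card S₂ + 1) * (T.map W).prod) := by gcongr
      _ = _ := by ring
  · have hex : ∃ e ∈ S, endpointCount e v ≠ 0 := by
      by_contra hcon
      push Not at hcon
      rw [Multiset.sum_eq_zero] at hv
      · omega
      · intro x hx
        obtain ⟨e, he, rfl⟩ := Multiset.mem_map.1 hx
        exact hcon e he
    obtain ⟨e, he, hev⟩ := hex
    obtain ⟨a, hav, hWe, hce⟩ := hother e he hev
    have hva : (S.map (endpointCount · v)).sum ≤ (S.map (endpointCount · a)).sum := by
      refine Multiset.sum_map_le_sum_map _ _ fun f hf => ?_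
      by_cases hfv : endpointCount f v = 0
      · simp [hfv]
      obtain ⟨b, hbv, hWf, hcf⟩ := hother f hf hfv
      have : a = b := by
        by_contra hne
        exact hab ⟨e, he, f, hf, a, b, hne, hav, hbv, hWe, hWf, hce, hcf⟩
      subst this
      simp [hcf, hav]
    obtain ⟨S₁, rfl⟩ := Multiset.exists_cons_of_mem he
    have hdeg' (j : V) : m ≤ (S₁.map (endpointCount · j)).sum := by
      have h1 := hdeg j
      simp only [Multiset.map_cons, Multiset.sum_cons] at h1 hv hva
      by_cases hj : v = j
      · subst hj
        simp [hce, hav] at hv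
        omega
      · by_cases hja : a = j
        · subst hja
          simp [hce, hav, hav.symm] at hv hva
          omega
        · simpa [hce, hj, hja] using h1
    obtain ⟨T, hT1, hT2, hT3⟩ := ih (Multiset.card S₁) (by simp) S₁
      (fun e' he' => hS _ (by simp [he'])) hdeg' rfl
    refine ⟨T, hT1, hT2, ?_⟩
    simp only [Multiset.map_cons, Multiset.prod_cons, Multiset.card_cons]
    calc W e * (S₁.map W).prod ≤ C * (C ^ Multiset.card S₁ * (T.map W).prod) := by
          gcongr
          · exact hprod _
          · exact hle e
      _ = _ := by ring

/-- Version of `exists_edges_of_degree_ge` for edge multiplicities. -/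
lemma exists_degree_mem_of_degree_ge {V : Type*} [Fintype V] [DecidableEq V] (W : V × V → ℝ)
    {C : ℝ} (hC : 1 ≤ C) (m : ℕ) (hsymm : ∀ a b, W (a, b) = W (b, a)) (hnn : ∀ e, 0 ≤ W e)
    (hle : ∀ e, W e ≤ C) (htri : ∀ v a b, a ≠ b → W (v, a) * W (v, b) ≤ C * W (a, b))
    (n : V × V → ℕ) (hn : ∀ e, e.1 = e.2 → n e = 0) (hdeg : ∀ j, m ≤ degree n j) :
    ∃ k : V × V → ℕ, (∀ j, m ≤ degree k j ∧ degree k j ≤ m + 1) ∧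
      ∏ e, W e ^ n e ≤ C ^ (∑ e, n e) * ∏ e, W e ^ k e := by
  set S : Multiset (V × V) := ∑ e, Multiset.replicate (n e) e with hSdef
  have hmap {M : Type} [AddCommMonoid M] (g : V × V → M) :
      (S.map g).sum = ∑ e, n e • g e := by
    rw [hSdef, ← Multiset.coe_mapAddMonoidHom, map_sum, ← Multiset.coe_sumAddMonoidHom, map_sum]
    simp
  have hmapprod (g : V × V → ℝ) : (S.map g).prod = ∏ e, g e ^ n e := by
    have := hmap (M := Additive ℝ) (fun e => Additive.ofMul (g e))
    exact this
  have hcard : Multiset.card S = ∑ e, n e := by simp [hSdef]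
  obtain ⟨T, -, hT2, hT3⟩ := exists_edges_of_degree_ge W hC m hsymm hnn hle htri S
    (by
      intro e he heq
      simp only [hSdef, Multiset.mem_sum, Finset.mem_univ, true_and, Multiset.mem_replicate] at he
      obtain ⟨a, ha, rfl⟩ := he
      exact ha (hn _ heq))
    (fun j => by simpa [hmap, degree] using hdeg j)
  have hTdeg (j : V) : degree (fun e => T.count e) j = (T.map (endpointCount · j)).sum := by
    rw [Finset.sum_multiset_map_count, degree]
    symm
    refine Finset.sum_subset (Finset.subset_univ _) fun e _ he => ?_
    simp [Multiset.count_eq_zero.2 (fun h => he (Multiset.mem_toFinset.2 h))]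
  refine ⟨fun e => T.count e, fun j => by rw [hTdeg]; exact hT2 j, ?_⟩
  rw [hmapprod, hcard, Finset.prod_multiset_map_count] at hT3
  refine hT3.trans_eq ?_
  congr 1
  refine Finset.prod_subset (Finset.subset_univ _) fun e _ he => ?_
  simp [Multiset.count_eq_zero.2 (fun h => he (Multiset.mem_toFinset.2 h))]

lemma le_degree {V : Type*} [Fintype V] [DecidableEq V] (n : V × V → ℕ) (e : V × V) :
    n e ≤ degree n e.1 := by
  have h : n e * endpointCount e e.1 ≤ degree n e.1 :=
    Finset.single_le_sum (f := fun e' => n e' * endpointCount e' e.1)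
      (fun _ _ => Nat.zero_le _) (Finset.mem_univ e)
  have h1 : 1 ≤ endpointCount e e.1 := by simp [endpointCount]
  nlinarith

lemma prod_pow_degree {V : Type*} [Fintype V] [DecidableEq V] (n : V × V → ℕ) (w : V → ℂ) :
    ∏ j, w j ^ degree n j = ∏ e, (w e.1 * w e.2) ^ n e := by
  simp_rw [degree, ← Finset.prod_pow_eq_pow_sum]
  rw [Finset.prod_comm]
  refine Finset.prod_congr rfl fun e _ => ?_
  simp_rw [mul_comm (n e), pow_mul]
  rw [Finset.prod_pow]
  congr 1
  simp_rw [endpointCount, pow_add, Finset.prod_mul_distrib]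
  simp [pow_ite]

/-- Truncating multiplicities at `m` does not change whether all degrees are at least `m`. -/
lemma le_degree_min_iff {V : Type*} [Fintype V] [DecidableEq V] (m : ℕ) (n : V × V → ℕ) (j : V) :
    m ≤ degree (fun e => min (n e) m) j ↔ m ≤ degree n j := by
  constructor
  · intro h
    refine h.trans (Finset.sum_le_sum fun e _ => ?_)
    gcongr
    exact min_le_left _ _
  · intro h
    by_cases hc : ∃ e, endpointCount e j ≠ 0 ∧ m ≤ n e
    · obtain ⟨e, he, hme⟩ := hc
      have h' : min (n e) m * endpointCount e j ≤ degree (fun e => min (n e) m) j :=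
        Finset.single_le_sum (f := fun e' => min (n e') m * endpointCount e' j)
          (fun _ _ => Nat.zero_le _) (Finset.mem_univ e)
      rw [min_eq_right hme] at h'
      exact (Nat.le_mul_of_pos_right m (Nat.pos_of_ne_zero he)).trans h'
    · push Not at hc
      refine h.trans_eq (Finset.sum_congr rfl fun e _ => ?_)
      by_cases he : endpointCount e j = 0
      · simp [he]
      · simp only [min_eq_left (hc e he).le]

section Gaussian

variable {Ω V : Type*} [MeasurableSpace Ω] [Fintype V] {P : Measure Ω}
  {X : V → Ω → ℝ}

lemma IsCenteredGaussianFamily.map_sum_eq {ι : Type*} {Φ : ι → Ω → ℝ}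
    (hΦ : IsCenteredGaussianFamily P Φ) (x : V → ι) (c : V → ℝ) :
    ∃ v : NNReal, P.map (fun ω => ∑ j, c j * Φ (x j) ω) = gaussianReal 0 v := by
  classical
  obtain ⟨v, hv⟩ := hΦ (Finset.univ.image x) (fun i => ∑ j with x j = i, c j)
  refine ⟨v, hv ▸ congrArg (P.map ·) (funext fun ω => ?_)⟩
  rw [← Finset.sum_fiberwise_of_maps_to (s := Finset.univ) (t := Finset.univ.image x) (g := x)
    (fun j _ => Finset.mem_image_of_mem x (Finset.mem_univ j))]
  refine Finset.sum_congr rfl fun i _ => ?_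
  rw [Finset.sum_mul]
  refine Finset.sum_congr rfl fun j hj => ?_
  rw [(Finset.mem_filter.1 hj).2]

lemma exists_map_eq_gaussianReal
    (hX : ∀ c : V → ℝ, ∃ v : NNReal, P.map (fun ω => ∑ j, c j * X j ω) = gaussianReal 0 v)
    (j : V) : ∃ v : NNReal, P.map (X j) = gaussianReal 0 v := by
  classical
  obtain ⟨v, hv⟩ := hX (Pi.single j 1)
  exact ⟨v, by simpa [Pi.single_apply] using hv⟩

lemma aemeasurable_of_map_eq_gaussianReal {Y : Ω → ℝ} {v : NNReal}
    (hY : P.map Y = gaussianReal 0 v) : AEMeasurable Y P := by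
  have : NeZero (P.map Y) := by rw [hY]; infer_instance
  exact aemeasurable_of_map_neZero this

lemma memLp_two_of_map_eq_gaussianReal {Y : Ω → ℝ} {v : NNReal}
    (hY : P.map Y = gaussianReal 0 v) : MemLp Y 2 P := by
  have h := memLp_id_gaussianReal (μ := 0) (v := v) 2
  rw [← hY] at h
  exact h.comp_of_map (aemeasurable_of_map_eq_gaussianReal hY)

lemma integral_sq_of_map_eq_gaussianReal {Y : Ω → ℝ} {v : NNReal}
    (hY : P.map Y = gaussianReal 0 v) : ∫ ω, Y ω ^ 2 ∂P = v := by
  have h : ∫ y, y ^ 2 ∂(P.map Y) = ∫ ω, Y ω ^ 2 ∂P :=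
    integral_map (aemeasurable_of_map_eq_gaussianReal hY) (by fun_prop)
  rw [← h, hY]
  have := variance_fun_id_gaussianReal (μ := 0) (v := v)
  rwa [variance_of_integral_eq_zero (by fun_prop) (by simp)] at this

lemma integral_sq_sum
    (hX : ∀ c : V → ℝ, ∃ v : NNReal, P.map (fun ω => ∑ j, c j * X j ω) = gaussianReal 0 v)
    (c : V → ℝ) : ∫ ω, (∑ j, c j * X j ω) ^ 2 ∂P =
      ∑ i, ∑ j, c i * c j * ∫ ω, X i ω * X j ω ∂P := by
  have hL (j : V) : MemLp (X j) 2 P :=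
    memLp_two_of_map_eq_gaussianReal (exists_map_eq_gaussianReal hX j).choose_spec
  have hi (i j : V) : Integrable (fun ω => c i * c j * (X i ω * X j ω)) P :=
    ((hL i).integrable_mul (hL j)).const_mul _
  simp_rw [sq, Finset.sum_mul_sum]
  rw [integral_finsetSum _ fun i _ => integrable_finsetSum _ fun j _ =>
    (hi i j).congr (.of_forall fun ω => by ring)]
  refine Finset.sum_congr rfl fun i _ => ?_
  rw [integral_finsetSum _ fun j _ => (hi i j).congr (.of_forall fun ω => by ring)]
  refine Finset.sum_congr rfl fun j _ => ?_
  rw [← integral_const_mul]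
  exact integral_congr_ae (.of_forall fun ω => by ring)

lemma integrable_exp_sum
    (hX : ∀ c : V → ℝ, ∃ v : NNReal, P.map (fun ω => ∑ j, c j * X j ω) = gaussianReal 0 v)
    (c : V → ℝ) : Integrable (fun ω => Real.exp (∑ j, c j * X j ω)) P := by
  obtain ⟨v, hv⟩ := hX c
  have h := integrable_exp_mul_gaussianReal (μ := 0) (v := v) 1
  rw [← hv] at h
  simpa [Function.comp_def] using h.comp_aemeasurable (aemeasurable_of_map_eq_gaussianReal hv)

lemma integral_exp_sum
    (hX : ∀ c : V → ℝ, ∃ v : NNReal, P.map (fun ω => ∑ j, c j * X j ω) = gaussianReal 0 v)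
    (c : V → ℝ) : ∫ ω, Real.exp (∑ j, c j * X j ω) ∂P =
      Real.exp ((∑ i, ∑ j, c i * c j * ∫ ω, X i ω * X j ω ∂P) / 2) := by
  obtain ⟨v, hv⟩ := hX c
  have h := mgf_gaussianReal hv 1
  rw [← integral_sq_sum hX, integral_sq_of_map_eq_gaussianReal hv]
  simpa [mgf] using h

/-- The exponential moments of a centered Gaussian family, with complex coefficients. -/
lemma integral_cexp_sum [IsProbabilityMeasure P]
    (hX : ∀ c : V → ℝ, ∃ v : NNReal, P.map (fun ω => ∑ j, c j * X j ω) = gaussianReal 0 v)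
    (w : V → ℂ) : ∫ ω, Complex.exp (∑ j, w j * X j ω) ∂P =
      Complex.exp ((∑ i, ∑ j, w i * w j * ((∫ ω, X i ω * X j ω ∂P : ℝ) : ℂ)) / 2) := by
  set R : V → V → ℝ := fun i j => ∫ ω, X i ω * X j ω ∂P with hR
  have hRsymm (i j : V) : R i j = R j i := by simp only [hR, mul_comm]
  set a : V → ℝ := fun j => (w j).re
  set b : V → ℝ := fun j => (w j).im
  set Y : Ω → ℝ := fun ω => ∑ j, a j * X j ω with hYdef
  set Z : Ω → ℝ := fun ω => ∑ j, b j * X j ω with hZdef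
  set Q := ∑ i, ∑ j, a i * a j * R i j
  set S := ∑ i, ∑ j, a i * b j * R i j
  have hT0 : 0 ≤ ∑ i, ∑ j, b i * b j * R i j := by
    rw [← integral_sq_sum hX]; positivity
  set T : NNReal := ⟨∑ i, ∑ j, b i * b j * R i j, hT0⟩
  have hintY : Integrable (fun ω => Real.exp (Y ω)) P := integrable_exp_sum hX a
  have hQ : ∫ ω, Real.exp (Y ω) ∂P = Real.exp (Q / 2) := integral_exp_sum hX a
  have : IsProbabilityMeasure (P.tilted Y) := isProbabilityMeasure_tilted hintY
  have hmgf : mgf Z (P.tilted Y) = mgf id (gaussianReal S T) := by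
    ext t
    rw [mgf_gaussianReal (μ := S) (v := T) Measure.map_id, mgf, integral_tilted]
    have h1 : ∀ ω, (Real.exp (Y ω) / ∫ ω, Real.exp (Y ω) ∂P) • Real.exp (t * Z ω) =
        (Real.exp (Q / 2))⁻¹ * Real.exp (∑ j, (a j + t * b j) * X j ω) := by
      intro ω
      rw [hQ, smul_eq_mul, div_mul_eq_mul_div, ← Real.exp_add, div_eq_inv_mul]
      congr 2
      simp only [hYdef, hZdef, Finset.mul_sum, ← Finset.sum_add_distrib]
      exact Finset.sum_congr rfl fun j _ => by ring
    simp_rw [h1]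
    rw [integral_const_mul, integral_exp_sum hX, ← Real.exp_neg, ← Real.exp_add]
    congr 1
    have h2 : ∑ i, ∑ j, (a i + t * b i) * (a j + t * b j) * R i j =
        Q + 2 * t * S + t ^ 2 * T := by
      have hS' : S = ∑ i, ∑ j, b i * a j * R i j := by
        simp only [S]
        rw [Finset.sum_comm]
        refine Finset.sum_congr rfl fun i _ => Finset.sum_congr rfl fun j _ => ?_
        rw [hRsymm j i]; ring
      have : 2 * t * S = t * S + t * ∑ i, ∑ j, b i * a j * R i j := by rw [← hS']; ring
      have hT' : (T : ℝ) = ∑ i, ∑ j, b i * b j * R i j := rfl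
      rw [this, hT']
      simp only [Q, S, Finset.mul_sum, ← Finset.sum_add_distrib]
      refine Finset.sum_congr rfl fun i _ => Finset.sum_congr rfl fun j _ => ?_
      ring
    rw [h2]
    ring
  have hset : integrableExpSet Z (P.tilted Y) = Set.univ := by
    rw [integrableExpSet_eq_of_mgf hmgf, integrableExpSet_id_gaussianReal]
  have hI := eqOn_complexMGF_of_mgf hmgf (x := Complex.I) (by simp [hset])
  rw [complexMGF_id_gaussianReal, complexMGF, integral_tilted, hQ] at hI
  have h3 : ∀ ω, Complex.exp (∑ j, w j * X j ω) = Complex.exp (Q / 2) *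
      ((Real.exp (Y ω) / Real.exp (Q / 2)) • Complex.exp (Complex.I * Z ω)) := by
    intro ω
    rw [Complex.real_smul]
    push_cast
    rw [← mul_assoc, mul_div_cancel₀ _ (Complex.exp_ne_zero _), ← Complex.exp_add]
    congr 1
    simp only [hYdef, hZdef]
    push_cast
    rw [Finset.mul_sum, ← Finset.sum_add_distrib]
    refine Finset.sum_congr rfl fun j _ => ?_
    conv_lhs => rw [← Complex.re_add_im (w j)]
    simp only [a, b]
    ring
  simp_rw [h3]
  rw [integral_const_mul, hI, ← Complex.exp_add]
  congr 1
  have h4 : ∑ i, ∑ j, w i * w j * (R i j : ℂ) = Q + 2 * Complex.I * S - T := by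
    have hS' : S = ∑ i, ∑ j, b i * a j * R i j := by
      simp only [S]
      rw [Finset.sum_comm]
      refine Finset.sum_congr rfl fun i _ => Finset.sum_congr rfl fun j _ => ?_
      rw [hRsymm j i]; ring
    have : 2 * Complex.I * (S : ℂ) =
        Complex.I * S + Complex.I * ((∑ i, ∑ j, b i * a j * R i j : ℝ) : ℂ) := by
      rw [← hS']; ring
    have hT' : ((T : ℝ) : ℂ) = ((∑ i, ∑ j, b i * b j * R i j : ℝ) : ℂ) := rfl
    rw [this, hT']
    simp only [Q, S]
    push_cast
    simp only [Finset.mul_sum, ← Finset.sum_add_distrib, ← Finset.sum_sub_distrib]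
    refine Finset.sum_congr rfl fun i _ => Finset.sum_congr rfl fun j _ => ?_
    conv_lhs => rw [← Complex.re_add_im (w i), ← Complex.re_add_im (w j)]
    simp only [a, b]
    ring_nf
    simp only [Complex.I_sq]
    ring
  rw [h4, Complex.I_sq]
  ring

lemma integrable_prod_exp_add_exp_neg
    (hX : ∀ c : V → ℝ, ∃ v : NNReal, P.map (fun ω => ∑ j, c j * X j ω) = gaussianReal 0 v)
    (M : ℝ) :
    Integrable (fun ω => ∏ j, (Real.exp (M * X j ω) + Real.exp (-(M * X j ω)))) P := by
  classical
  simp_rw [Finset.prod_add, ← Real.exp_sum, ← Real.exp_add]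
  refine integrable_finsetSum _ fun t _ => ?_
  refine (integrable_exp_sum hX (fun j => if j ∈ t then M else -M)).congr
    (.of_forall fun ω => ?_)
  simp only
  congr 1
  rw [← Finset.sum_sdiff (Finset.subset_univ t), add_comm]
  congr 1
  · exact Finset.sum_congr rfl fun j hj => by simp [hj]
  · exact Finset.sum_congr rfl fun j hj => by simp [(Finset.mem_sdiff.1 hj).2]

end Gaussian

section Circle

/-- The uniform probability measure on the interval `(0, 2π]`. -/
def circleMeasure : Measure ℝ :=
  (ENNReal.ofReal (2 * Real.pi))⁻¹ • volume.restrict (Set.Ioc 0 (2 * Real.pi))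

instance : IsProbabilityMeasure circleMeasure := by
  constructor
  have h : ENNReal.ofReal (2 * Real.pi) ≠ 0 := by simp [Real.pi_pos]
  simp only [circleMeasure, Measure.smul_apply, Measure.restrict_apply MeasurableSet.univ,
    Set.univ_inter, Real.volume_Ioc, sub_zero, smul_eq_mul]
  exact ENNReal.inv_mul_cancel h ENNReal.ofReal_ne_top

lemma integral_circleMeasure (f : ℝ → ℂ) :
    ∫ φ, f φ ∂circleMeasure = (2 * Real.pi : ℝ)⁻¹ • ∫ φ in (0)..(2 * Real.pi), f φ := by
  rw [circleMeasure, integral_smul_measure, intervalIntegral.integral_of_le Real.two_pi_pos.le,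
    ENNReal.toReal_inv, ENNReal.toReal_ofReal Real.two_pi_pos.le]

lemma integrable_circleMeasure {f : ℝ → ℂ} (hf : Continuous f) : Integrable f circleMeasure := by
  refine Integrable.smul_measure ?_ (by simp [Real.pi_pos])
  exact (hf.integrableOn_Icc (a := 0) (b := 2 * Real.pi)).mono_set Set.Ioc_subset_Icc_self

lemma integral_circleMap_mul_inv_pow {F : ℂ → ℂ} (hF : Differentiable ℂ F) (c : ℂ) {R : ℝ}
    (hR : 0 < R) (n : ℕ) :
    ∫ φ, (circleMap 0 R φ ^ n)⁻¹ * F (circleMap c R φ) ∂circleMeasure =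
      iteratedDeriv n F c / n.factorial := by
  have h := DiffContOnCl.circleIntegral_one_div_sub_center_pow_smul hR n
    (hF.diffContOnCl (s := Metric.ball c R))
  have h' : (∮ z in C(c, R), (1 / (z - c) ^ (n + 1)) • F z) =
      Complex.I * ∫ φ in (0)..(2 * Real.pi), (circleMap 0 R φ ^ n)⁻¹ * F (circleMap c R φ) := by
    rw [circleIntegral, ← intervalIntegral.integral_const_mul]
    refine intervalIntegral.integral_congr fun φ _ => ?_
    have h0 : circleMap 0 R φ ≠ 0 := circleMap_ne_center hR.ne'
    have h1 : circleMap c R φ - c = circleMap 0 R φ := by simp [circleMap]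
    simp only [deriv_circleMap, smul_eq_mul, h1]
    field_simp
    ring
  rw [h'] at h
  rw [integral_circleMeasure, Complex.real_smul]
  have hI := Complex.I_ne_zero
  have hpi : (Real.pi : ℂ) ≠ 0 := by exact_mod_cast Real.pi_ne_zero
  have h2 : ∫ φ in (0)..(2 * Real.pi), (circleMap 0 R φ ^ n)⁻¹ * F (circleMap c R φ) =
      2 * Real.pi / n.factorial * iteratedDeriv n F c := by
    apply mul_left_cancel₀ hI
    rw [h, smul_eq_mul]
    ring
  rw [h2]
  push_cast
  field_simp

/-- Kernel on the circle of radius `2` which evaluates an entire function at `1` after removal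
of the terms of degree `< m` of its expansion at `0`. -/
def truncKernel (m : ℕ) (φ : ℝ) : ℂ :=
  circleMap 0 2 φ / (circleMap 0 2 φ - 1) - ∑ n ∈ Finset.range m, (circleMap 0 2 φ ^ n)⁻¹

lemma continuous_inv_circleMap_pow {R : ℝ} (hR : 0 < R) (n : ℕ) :
    Continuous fun φ => (circleMap 0 R φ ^ n)⁻¹ :=
  ((continuous_circleMap 0 R).pow n).inv₀ fun _ => pow_ne_zero _ (circleMap_ne_center hR.ne')

lemma continuous_circleMap_div_sub_one :
    Continuous fun φ => circleMap 0 2 φ / (circleMap 0 2 φ - 1) := by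
  refine (continuous_circleMap 0 2).div ((continuous_circleMap 0 2).sub continuous_const) ?_
  intro φ h
  have h1 : ‖circleMap 0 2 φ‖ = 2 := by simp
  rw [sub_eq_zero.1 h] at h1
  norm_num at h1

lemma continuous_truncKernel (m : ℕ) : Continuous (truncKernel m) :=
  continuous_circleMap_div_sub_one.sub
    (continuous_finsetSum _ fun n _ => continuous_inv_circleMap_pow two_pos n)

lemma integral_truncKernel_mul {F : ℂ → ℂ} (hF : Differentiable ℂ F) (m : ℕ) :
    ∫ φ, truncKernel m φ * F (circleMap 0 2 φ) ∂circleMeasure =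
      F 1 - ∑ n ∈ Finset.range m, iteratedDeriv n F 0 / n.factorial := by
  have hFc : Continuous fun φ => F (circleMap 0 2 φ) :=
    hF.continuous.comp (continuous_circleMap 0 2)
  have h1 : ∫ φ, circleMap 0 2 φ / (circleMap 0 2 φ - 1) * F (circleMap 0 2 φ) ∂circleMeasure
      = F 1 := by
    have := DiffContOnCl.circleAverage_smul_div (c := 0) (R := 2) (w := 1)
      (hF.diffContOnCl (s := Metric.ball 0 |2|)) (by simp)
    rw [Real.circleAverage_def] at this
    rw [integral_circleMeasure, ← this]
    simp
  simp_rw [truncKernel, sub_mul, Finset.sum_mul]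
  rw [integral_sub, integral_finsetSum, h1]
  · simp_rw [integral_circleMap_mul_inv_pow hF 0 two_pos]
  · exact fun n _ => integrable_circleMeasure ((continuous_inv_circleMap_pow two_pos n).mul hFc)
  · exact integrable_circleMeasure (continuous_circleMap_div_sub_one.mul hFc)
  · exact integrable_finsetSum _ fun n _ =>
      integrable_circleMeasure ((continuous_inv_circleMap_pow two_pos n).mul hFc)

lemma integral_truncKernel_mul_pow (m k : ℕ) :
    ∫ φ, truncKernel m φ * circleMap 0 2 φ ^ k ∂circleMeasure = if m ≤ k then 1 else 0 := by
  rw [integral_truncKernel_mul (F := fun z => z ^ k) (by fun_prop)]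
  simp only [iteratedDeriv_fun_pow_zero, one_pow]
  by_cases h : m ≤ k
  · rw [if_pos h, Finset.sum_eq_zero, sub_zero]
    intro n hn
    have := Finset.mem_range.1 hn
    simp [show n ≠ k by omega]
  · rw [if_neg h]
    rw [Finset.sum_eq_single k]
    · simp [Nat.factorial_ne_zero]
    · intro n _ hn
      simp [hn]
    · intro hk
      exact absurd (Finset.mem_range.2 (not_le.1 h)) hk

end Circle

section Wick

/-- Generating function of the Wick powers. -/
def wickExp (a x : ℝ) (w : ℂ) : ℂ := Complex.exp (w * x - w ^ 2 * a / 2)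

lemma differentiable_wickExp (a x : ℝ) : Differentiable ℂ (wickExp a x) := by
  unfold wickExp; fun_prop

lemma iteratedDeriv_wickExp {a : ℝ} (ha : 0 < a) (x : ℝ) (n : ℕ) :
    iteratedDeriv n (wickExp a x) = fun w => (Real.sqrt a : ℂ) ^ n *
      Polynomial.aeval ((x - a * w) / (Real.sqrt a : ℂ)) (Polynomial.hermite n) *
        wickExp a x w := by
  have hs : (Real.sqrt a : ℂ) ≠ 0 := by
    exact_mod_cast (Real.sqrt_pos.2 ha).ne'
  have hsq : (Real.sqrt a : ℂ) ^ 2 = a := by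
    exact_mod_cast Real.sq_sqrt ha.le
  induction n with
  | zero => simp
  | succ n ih =>
    rw [iteratedDeriv_succ, ih]
    ext w
    have h1 : HasDerivAt (fun w : ℂ => ((x : ℂ) - a * w) / (Real.sqrt a : ℂ))
        (-(a : ℂ) / (Real.sqrt a : ℂ)) w := by
      have := (((hasDerivAt_id w).const_mul (a : ℂ)).const_sub (x : ℂ)).div_const
        (Real.sqrt a : ℂ)
      simpa using this
    have h2 := (Polynomial.hasDerivAt_aeval (Polynomial.hermite n)
      (((x : ℂ) - a * w) / (Real.sqrt a : ℂ))).comp w h1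
    have h3 : HasDerivAt (wickExp a x) (wickExp a x w * (x - a * w)) w := by
      have h4 : HasDerivAt (fun w : ℂ => w * x - w ^ 2 * a / 2) ((x : ℂ) - a * w) w := by
        have := ((hasDerivAt_id w).mul_const (x : ℂ)).sub
          ((((hasDerivAt_id w).pow 2).mul_const (a : ℂ)).div_const 2)
        refine this.congr_deriv ?_
        simp
        ring
      exact h4.cexp
    have h5 := ((h2.const_mul ((Real.sqrt a : ℂ) ^ n)).mul h3).deriv
    simp only [Function.comp_def] at h5
    refine h5.trans ?_
    rw [Polynomial.hermite_succ, map_sub, map_mul, Polynomial.aeval_X, ← hsq]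
    field_simp
    ring

lemma iteratedDeriv_wickExp_zero {a : ℝ} (ha : 0 < a) (x : ℝ) (n : ℕ) :
    iteratedDeriv n (wickExp a x) 0 = (wick a n x : ℝ) := by
  rw [iteratedDeriv_wickExp ha]
  simp only [wickExp, wick]
  push_cast
  simp only [mul_zero, sub_zero, zero_mul, ne_eq, OfNat.ofNat_ne_zero, not_false_eq_true,
    zero_pow, zero_div, Complex.exp_zero, mul_one]
  congr 1
  rw [← Complex.ofReal_div, ← Complex.coe_algebraMap, Polynomial.aeval_algebraMap_apply]

lemma wick_eq_integral {a : ℝ} (ha : 0 < a) (x : ℝ) (n : ℕ) :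
    ((wick a n x : ℝ) : ℂ) = ∫ φ, (n.factorial : ℂ) * (circleMap 0 2 φ ^ n)⁻¹ *
      wickExp a x (circleMap 0 2 φ) ∂circleMeasure := by
  simp_rw [mul_assoc]
  rw [integral_const_mul, integral_circleMap_mul_inv_pow (differentiable_wickExp a x) 0 two_pos,
    iteratedDeriv_wickExp_zero ha]
  have : (n.factorial : ℂ) ≠ 0 := by exact_mod_cast n.factorial_ne_zero
  field_simp

/-- The extension of `hFun` to complex frequencies. -/
def hFunC (m : ℕ) (z : ℂ) (x a : ℝ) : ℂ :=
  Complex.exp (Complex.I * z * x) -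
    ∑ n ∈ Finset.range m, (Complex.I ^ n / (n.factorial : ℂ)) * z ^ n *
      Complex.exp (-(a * z ^ 2) / 2) * ((wick a n x : ℝ) : ℂ)

lemma hFun_eq_hFunC (m : ℕ) (t x a : ℝ) : hFun m t x a = hFunC m t x a := by
  simp [hFun, hFunC]

lemma differentiable_hFunC (m : ℕ) (x a : ℝ) : Differentiable ℂ fun z => hFunC m z x a := by
  unfold hFunC; fun_prop

lemma iteratedDeriv_comp_ofReal {F : ℂ → ℂ} (hF : Differentiable ℂ F) (r : ℕ) :
    iteratedDeriv r (fun t : ℝ => F t) = fun t : ℝ => iteratedDeriv r F t := by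
  induction r with
  | zero => simp
  | succ r ih =>
    rw [iteratedDeriv_succ, ih, iteratedDeriv_succ]
    ext t
    have hd : Differentiable ℂ (iteratedDeriv r F) :=
      (hF.contDiff (n := (r + 1 : ℕ))).differentiable_iteratedDeriv r (by exact_mod_cast r.lt_succ_self)
    exact ((hd t).hasDerivAt.comp_ofReal).deriv

lemma iteratedDeriv_hFun_eq_integral (m r : ℕ) (θ x a : ℝ) :
    iteratedDeriv r (fun t => hFun m t x a) θ =
      ∫ φ, (r.factorial : ℂ) * (circleMap 0 1 φ ^ r)⁻¹ *
        hFunC m (circleMap θ 1 φ) x a ∂circleMeasure := by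
  simp_rw [mul_assoc]
  rw [integral_const_mul, integral_circleMap_mul_inv_pow (differentiable_hFunC m x a) θ one_pos]
  simp_rw [hFun_eq_hFunC]
  rw [iteratedDeriv_comp_ofReal (differentiable_hFunC m x a)]
  have : (r.factorial : ℂ) ≠ 0 := by exact_mod_cast r.factorial_ne_zero
  field_simp

lemma hFunC_eq_integral (m : ℕ) {a : ℝ} (ha : 0 < a) (z : ℂ) (x : ℝ) :
    hFunC m z x a = ∫ φ, Complex.exp (-(a * z ^ 2) / 2) * truncKernel m φ *
      wickExp a x (Complex.I * z * circleMap 0 2 φ) ∂circleMeasure := by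
  simp_rw [mul_assoc]
  have hd : Differentiable ℂ fun u => wickExp a x (Complex.I * z * u) :=
    (differentiable_wickExp a x).comp (by fun_prop)
  have h := integral_truncKernel_mul hd m
  simp only [mul_assoc] at h
  rw [integral_const_mul, h, mul_sub, hFunC]
  congr 1
  · rw [wickExp, ← Complex.exp_add]
    congr 1
    ring_nf
    simp only [Complex.I_sq]
    ring
  · rw [Finset.mul_sum]
    refine Finset.sum_congr rfl fun n _ => ?_
    have := congrFun (iteratedDeriv_comp_const_mul (n := n) (f := wickExp a x)
      (differentiable_wickExp a x).contDiff (Complex.I * z)) 0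
    simp only [mul_assoc] at this
    rw [this, mul_zero, mul_zero, iteratedDeriv_wickExp_zero ha, mul_pow]
    ring

end Wick

section Expansion

lemma integrable_pow_div_factorial (b : ℂ) :
    Integrable (fun n : ℕ => b ^ n / (n.factorial : ℂ)) Measure.count := by
  rw [integrable_count_iff]
  exact NormedSpace.norm_expSeries_div_summable b

lemma integral_pow_div_factorial (b : ℂ) :
    ∫ n : ℕ, b ^ n / (n.factorial : ℂ) ∂Measure.count = Complex.exp b := by
  rw [integral_countable (integrable_pow_div_factorial b), Complex.exp_eq_exp_ℂ,
    NormedSpace.exp_eq_tsum_div]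
  simp

variable {Ω V : Type*} [MeasurableSpace Ω] [Fintype V] {P : Measure Ω} {X : V → Ω → ℝ}

/-- Exchange of an expectation with integrals over the torus. -/
lemma integral_prod_integral_swap [IsProbabilityMeasure P]
    (hX : ∀ c : V → ℝ, ∃ v : NNReal, P.map (fun ω => ∑ j, c j * X j ω) = gaussianReal 0 v)
    {f : V → ℝ → ℝ → ℂ} (hf : ∀ j, Continuous fun p : ℝ × ℝ => f j p.1 p.2) (C : V → ℝ) (M : ℝ)
    (hbound : ∀ j φ x, ‖f j φ x‖ ≤ C j * (Real.exp (M * x) + Real.exp (-(M * x)))) :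
    ∫ ω, ∏ j, ∫ φ, f j φ (X j ω) ∂circleMeasure ∂P =
      ∫ φ : V → ℝ, ∫ ω, ∏ j, f j (φ j) (X j ω) ∂P ∂(Measure.pi fun _ => circleMeasure) := by
  have hXm (j : V) : AEMeasurable (X j) P :=
    aemeasurable_of_map_eq_gaussianReal (exists_map_eq_gaussianReal hX j).choose_spec
  have h1 (ω : Ω) : ∏ j, ∫ φ, f j φ (X j ω) ∂circleMeasure =
      ∫ φ : V → ℝ, ∏ j, f j (φ j) (X j ω) ∂(Measure.pi fun _ => circleMeasure) :=
    (integral_fintype_prod_eq_prod (fun j φ => f j φ (X j ω))).symm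
  simp_rw [h1]
  refine integral_integral_swap ?_
  have hdom : Integrable (fun ω => (∏ j, C j) *
      ∏ j, (Real.exp (M * X j ω) + Real.exp (-(M * X j ω)))) P :=
    (integrable_prod_exp_add_exp_neg hX M).const_mul _
  refine (hdom.comp_fst (Measure.pi fun _ => circleMeasure)).mono' ?_ (.of_forall ?_)
  · refine Finset.aestronglyMeasurable_fun_prod _ fun j _ => ?_
    have hm : AEMeasurable (fun p : Ω × (V → ℝ) => (p.2 j, X j p.1))
        (P.prod (Measure.pi fun _ => circleMeasure)) :=
      ((measurable_pi_apply j).comp measurable_snd).aemeasurable.prodMk (hXm j).comp_fst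
    exact ((hf j).measurable.comp_aemeasurable hm).aestronglyMeasurable
  · rintro ⟨ω, φ⟩
    simp only [Function.uncurry, norm_prod, ← Finset.prod_mul_distrib]
    exact Finset.prod_le_prod (fun _ _ => norm_nonneg _) fun j _ => hbound j (φ j) (X j ω)

variable [DecidableEq V]

/-- Edge weights: half of the covariance off the diagonal, and zero on the diagonal. -/
def edgeWeight (R : V → V → ℝ) (e : V × V) : ℝ := if e.1 = e.2 then 0 else R e.1 e.2 / 2

lemma integral_prod_wickExp [IsProbabilityMeasure P]
    (hX : ∀ c : V → ℝ, ∃ v : NNReal, P.map (fun ω => ∑ j, c j * X j ω) = gaussianReal 0 v)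
    {R : V → V → ℝ} (hR : ∀ i j, ∫ ω, X i ω * X j ω ∂P = R i j) (w : V → ℂ) :
    ∫ ω, ∏ j, wickExp (R j j) (X j ω) (w j) ∂P =
      ∏ e, Complex.exp (edgeWeight R e * (w e.1 * w e.2)) := by
  have h1 (ω : Ω) : ∏ j, wickExp (R j j) (X j ω) (w j) =
      Complex.exp (-∑ j, w j ^ 2 * R j j / 2) * Complex.exp (∑ j, w j * X j ω) := by
    simp_rw [wickExp]
    rw [← Complex.exp_sum, ← Complex.exp_add, Finset.sum_sub_distrib]
    congr 1
    ring
  simp_rw [h1]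
  rw [integral_const_mul, integral_cexp_sum hX, ← Complex.exp_sum, ← Complex.exp_add]
  congr 1
  simp_rw [hR]
  have h2 (i : V) : w i ^ 2 * R i i / 2 = ∑ j, if i = j then w i * w j * (R i j : ℂ) / 2 else 0 := by
    simp [sq]
  simp_rw [h2]
  rw [Fintype.sum_prod_type, Finset.sum_div, neg_add_eq_sub, ← Finset.sum_sub_distrib]
  refine Finset.sum_congr rfl fun i _ => ?_
  rw [Finset.sum_div, ← Finset.sum_sub_distrib]
  refine Finset.sum_congr rfl fun j _ => ?_
  by_cases h : i = j
  · simp [edgeWeight, h]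
  · simp only [edgeWeight, h, if_false]
    push_cast
    ring

lemma norm_wickExp_le {a M : ℝ} {w : ℂ} (hw : ‖w‖ ≤ M) (x : ℝ) :
    ‖wickExp a x w‖ ≤ Real.exp (M ^ 2 * |a|) * (Real.exp (M * x) + Real.exp (-(M * x))) := by
  have hM : 0 ≤ M := (norm_nonneg w).trans hw
  have h1 : ‖wickExp a x w‖ ≤ Real.exp (M ^ 2 * |a|) * Real.exp (M * |x|) := by
    rw [wickExp, sub_eq_neg_add, Complex.exp_add, norm_mul]
    gcongr
    · refine (Complex.norm_exp_le_exp_norm _).trans (Real.exp_le_exp.2 ?_)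
      rw [norm_neg, norm_div, norm_mul, norm_pow, Complex.norm_real, Real.norm_eq_abs]
      simp only [Complex.norm_ofNat]
      have h2 : ‖w‖ ^ 2 * |a| ≤ M ^ 2 * |a| := by gcongr
      have h3 : 0 ≤ ‖w‖ ^ 2 * |a| := by positivity
      linarith
    · refine (Complex.norm_exp_le_exp_norm _).trans (Real.exp_le_exp.2 ?_)
      rw [norm_mul, Complex.norm_real, Real.norm_eq_abs]
      gcongr
  refine h1.trans ?_
  gcongr
  rcases abs_cases x with ⟨h, -⟩ | ⟨h, -⟩ <;> rw [h]
  · linarith [Real.exp_pos (-(M * x))]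
  · rw [mul_neg]
    linarith [Real.exp_pos (M * x)]

lemma continuous_mul_wickExp {k w : ℝ → ℂ} (hk : Continuous k) (hw : Continuous w) (a : ℝ) :
    Continuous fun p : ℝ × ℝ => k p.1 * wickExp a p.2 (w p.1) := by
  unfold wickExp
  fun_prop

/-- Expansion of the correlations of averages of Wick exponentials over multigraphs on the
index set. -/
lemma integral_prod_integral_wickExp [IsProbabilityMeasure P]
    (hX : ∀ c : V → ℝ, ∃ v : NNReal, P.map (fun ω => ∑ j, c j * X j ω) = gaussianReal 0 v)
    {R : V → V → ℝ} (hR : ∀ i j, ∫ ω, X i ω * X j ω ∂P = R i j) {k w : V → ℝ → ℂ}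
    (hk : ∀ j, Continuous (k j)) (hw : ∀ j, Continuous (w j)) {A M : ℝ}
    (hkA : ∀ j φ, ‖k j φ‖ ≤ A) (hwM : ∀ j φ, ‖w j φ‖ ≤ M) :
    ∫ ω, ∏ j, ∫ φ, k j φ * wickExp (R j j) (X j ω) (w j φ) ∂circleMeasure ∂P =
      ∫ n : V × V → ℕ, (∏ e, (edgeWeight R e : ℂ) ^ n e / ((n e).factorial : ℂ)) *
        ∏ j, ∫ φ, k j φ * w j φ ^ degree n j ∂circleMeasure ∂(Measure.pi fun _ => Measure.count) := by
  rw [integral_prod_integral_swap hX (f := fun j φ x => k j φ * wickExp (R j j) x (w j φ))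
    (fun j => continuous_mul_wickExp (hk j) (hw j) _)
    (fun j => A * Real.exp (M ^ 2 * |R j j|)) M]
  swap
  · intro j φ x
    rw [norm_mul, mul_assoc]
    exact mul_le_mul (hkA j φ) (norm_wickExp_le (hwM j φ) x) (norm_nonneg _)
      ((norm_nonneg _).trans (hkA j φ))
  have h1 (φ : V → ℝ) : ∫ ω, ∏ j, k j (φ j) * wickExp (R j j) (X j ω) (w j (φ j)) ∂P =
      ∫ n : V × V → ℕ, (∏ j, k j (φ j)) *
        ∏ e, ((edgeWeight R e : ℂ) * (w e.1 (φ e.1) * w e.2 (φ e.2))) ^ n e /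
          ((n e).factorial : ℂ) ∂(Measure.pi fun _ => Measure.count) := by
    simp_rw [Finset.prod_mul_distrib]
    rw [integral_const_mul, integral_const_mul,
      integral_prod_wickExp hX hR (fun j => w j (φ j)),
      integral_fintype_prod_eq_prod (fun e (n : ℕ) =>
        ((edgeWeight R e : ℂ) * (w e.1 (φ e.1) * w e.2 (φ e.2))) ^ n / (n.factorial : ℂ))]
    simp_rw [integral_pow_div_factorial]
  simp_rw [h1]
  rw [integral_integral_swap]
  · refine integral_congr_ae (.of_forall fun n => ?_)
    simp only
    rw [← integral_fintype_prod_eq_prod (fun j φ => k j φ * w j φ ^ degree n j),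
      ← integral_const_mul]
    refine integral_congr_ae (.of_forall fun φ => ?_)
    simp only
    rw [Finset.prod_mul_distrib, prod_pow_degree n (fun j => w j (φ j))]
    have h2 : ∏ e, ((edgeWeight R e : ℂ) * (w e.1 (φ e.1) * w e.2 (φ e.2))) ^ n e /
        ((n e).factorial : ℂ) = (∏ e, (edgeWeight R e : ℂ) ^ n e / ((n e).factorial : ℂ)) *
          ∏ e, (w e.1 (φ e.1) * w e.2 (φ e.2)) ^ n e := by
      rw [← Finset.prod_mul_distrib]
      refine Finset.prod_congr rfl fun e _ => ?_
      rw [mul_pow]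
      ring
    rw [h2]
    ring
  · have hdom : Integrable (fun n : V × V → ℕ => (∏ _j : V, A) *
        ∏ e, ‖((|edgeWeight R e| * M ^ 2 : ℝ) : ℂ) ^ n e / ((n e).factorial : ℂ)‖)
        (Measure.pi fun _ => Measure.count) :=
      (Integrable.fintype_prod (f := fun e (n : ℕ) =>
        ‖((|edgeWeight R e| * M ^ 2 : ℝ) : ℂ) ^ n / (n.factorial : ℂ)‖)
        fun e => (integrable_pow_div_factorial _).norm).const_mul _
    refine (hdom.comp_snd (Measure.pi fun _ : V => circleMeasure)).mono' ?_ (.of_forall ?_)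
    · refine Measurable.aestronglyMeasurable ?_
      refine measurable_from_prod_countable_left fun n => ?_
      refine Continuous.measurable ?_
      simp only [Function.uncurry]
      fun_prop
    · rintro ⟨φ, n⟩
      simp only [Function.uncurry, norm_mul, norm_prod]
      have hA : ∀ j : V, 0 ≤ A := fun j => (norm_nonneg _).trans (hkA j 0)
      refine mul_le_mul (Finset.prod_le_prod (fun _ _ => norm_nonneg _) fun j _ => hkA j (φ j))
        (Finset.prod_le_prod (fun _ _ => norm_nonneg _) fun e _ => ?_)
        (Finset.prod_nonneg fun _ _ => norm_nonneg _) (Finset.prod_nonneg fun j _ => hA j)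
      rw [norm_div, norm_div, norm_pow, norm_pow, norm_mul, norm_mul, Complex.norm_real,
        Complex.norm_real, Real.norm_eq_abs, Real.norm_eq_abs, abs_mul, abs_abs,
        abs_of_nonneg (sq_nonneg M), sq]
      have hM : 0 ≤ M := (norm_nonneg _).trans (hwM e.1 0)
      gcongr
      · exact hwM _ _
      · exact hwM _ _

end Expansion

section Bounds

lemma norm_exp_sub_sum_le (m : ℕ) {b : ℂ} {A : ℝ} (hA : 1 ≤ A) (hb : Real.exp b.re ≤ A) :
    ‖Complex.exp b - ∑ n ∈ Finset.range m, b ^ n / (n.factorial : ℂ)‖ ≤ ‖b‖ ^ m * A := by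
  induction m generalizing b with
  | zero => simpa [Complex.norm_exp] using hb
  | succ m ih =>
    have hsum (w : ℂ) : HasDerivAt
        (fun w : ℂ => ∑ n ∈ Finset.range (m + 1), w ^ n / (n.factorial : ℂ))
        (∑ n ∈ Finset.range m, w ^ n / (n.factorial : ℂ)) w := by
      simp_rw [Finset.sum_range_succ', pow_zero]
      apply HasDerivAt.add_const
      apply HasDerivAt.fun_sum
      intro n _
      have h := (hasDerivAt_pow (n + 1) w).div_const ((n + 1).factorial : ℂ)
      refine h.congr_deriv ?_
      have : (n.factorial : ℂ) ≠ 0 := by exact_mod_cast n.factorial_ne_zero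
      have h' : (n : ℂ) + 1 ≠ 0 := by exact_mod_cast n.succ_ne_zero
      rw [Nat.factorial_succ]
      push_cast
      field_simp
    have hf (t : ℝ) : HasDerivAt (fun t : ℝ => Complex.exp (t * b) -
          ∑ n ∈ Finset.range (m + 1), (t * b) ^ n / (n.factorial : ℂ))
        (b * (Complex.exp (t * b) - ∑ n ∈ Finset.range m, (t * b) ^ n / (n.factorial : ℂ))) t := by
      have h1 : HasDerivAt (fun z : ℂ => z * b) b (t : ℂ) := by
        simpa using (hasDerivAt_id (t : ℂ)).mul_const b
      have h2 := ((Complex.hasDerivAt_exp (t * b)).sub (hsum (t * b))).comp (t : ℂ) h1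
      have h3 := h2.comp_ofReal
      rw [mul_comm] at h3
      exact h3
    have hbound (t : ℝ) (ht : t ∈ Set.Ico (0 : ℝ) 1) :
        ‖b * (Complex.exp (t * b) - ∑ n ∈ Finset.range m, (t * b) ^ n / (n.factorial : ℂ))‖ ≤
          ‖b‖ ^ (m + 1) * A := by
      have h1 : Real.exp ((t * b : ℂ).re) ≤ A := by
        rw [Complex.re_ofReal_mul]
        rcases le_total b.re 0 with h | h
        · exact (Real.exp_le_one_iff.2 (mul_nonpos_of_nonneg_of_nonpos ht.1 h)).trans hA
        · exact (Real.exp_le_exp.2 (mul_le_of_le_one_left h ht.2.le)).trans hb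
      have h2 : ‖(t * b : ℂ)‖ ≤ ‖b‖ := by
        rw [norm_mul, Complex.norm_real, Real.norm_eq_abs, abs_of_nonneg ht.1]
        exact mul_le_of_le_one_left (norm_nonneg _) ht.2.le
      rw [norm_mul, pow_succ', mul_assoc]
      refine mul_le_mul_of_nonneg_left ((ih h1).trans ?_) (norm_nonneg _)
      gcongr
    have h := norm_image_sub_le_of_norm_deriv_le_segment_01' (fun t _ => (hf t).hasDerivWithinAt)
      hbound
    simpa [Finset.sum_range_succ'] using h

lemma integrable_ite_pow_div_factorial (b : ℂ) (p : ℕ → Prop) [DecidablePred p] :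
    Integrable (fun n : ℕ => if p n then b ^ n / (n.factorial : ℂ) else 0) Measure.count := by
  refine (integrable_pow_div_factorial b).norm.mono' (by fun_prop) (.of_forall fun n => ?_)
  split_ifs
  · rfl
  · simpa using by positivity

lemma norm_integral_ite_min_eq_le {m k : ℕ} (hk : k ≤ m) {b : ℂ} {A : ℝ} (hA : 1 ≤ A)
    (hb : Real.exp b.re ≤ A) :
    ‖∫ n : ℕ, (if min n m = k then b ^ n / (n.factorial : ℂ) else 0) ∂Measure.count‖ ≤
      ‖b‖ ^ k * A := by
  rcases hk.eq_or_lt with rfl | hk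
  · convert norm_exp_sub_sum_le k hA hb using 2
    have h1 : ∀ n : ℕ, (if min n k = k then b ^ n / (n.factorial : ℂ) else 0) =
        b ^ n / (n.factorial : ℂ) - if n < k then b ^ n / (n.factorial : ℂ) else 0 := by
      intro n
      by_cases h : n < k
      · simp [h, h.ne, min_eq_left h.le]
      · simp [h, min_eq_right (not_lt.1 h)]
    simp_rw [h1]
    rw [integral_sub (integrable_pow_div_factorial b) (integrable_ite_pow_div_factorial b _),
      integral_pow_div_factorial, integral_countable (integrable_ite_pow_div_factorial b _),
      tsum_eq_sum (s := Finset.range k) (by simp +contextual)]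
    congr 1
    refine Finset.sum_congr rfl fun n hn => ?_
    simp [Finset.mem_range.1 hn]
  · have h1 : ∀ n : ℕ, min n m = k ↔ n = k := by omega
    simp_rw [h1]
    rw [integral_countable (integrable_ite_pow_div_factorial b _), tsum_eq_single k (by simp +contextual)]
    simp only [if_true, measureReal_def, Measure.count_singleton, ENNReal.toReal_one, one_smul,
      norm_div, norm_pow, Complex.norm_natCast]
    have h2 : (1 : ℝ) ≤ k.factorial := by exact_mod_cast k.factorial_pos
    calc ‖b‖ ^ k / k.factorial ≤ ‖b‖ ^ k := div_le_self (by positivity) h2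
      _ ≤ ‖b‖ ^ k * A := le_mul_of_one_le_right (by positivity) hA

lemma one_add_abs_pow_mul_exp_le {c : ℝ} (hc : 0 < c) (θ : ℝ) (N : ℕ) :
    (1 + |θ|) ^ N * Real.exp (-(c * θ ^ 2)) ≤ N.factorial * Real.exp (1 + 1 / (4 * c)) := by
  have h1 := Real.pow_div_factorial_le_exp (1 + |θ|) (by positivity) N
  rw [div_le_iff₀ (by positivity)] at h1
  calc (1 + |θ|) ^ N * Real.exp (-(c * θ ^ 2))
      ≤ Real.exp (1 + |θ|) * N.factorial * Real.exp (-(c * θ ^ 2)) := by gcongr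
    _ = N.factorial * Real.exp (1 + |θ| + -(c * θ ^ 2)) := by rw [Real.exp_add (1 + |θ|)]; ring
    _ ≤ N.factorial * Real.exp (1 + 1 / (4 * c)) := by
      refine mul_le_mul_of_nonneg_left (Real.exp_le_exp.2 ?_) (by positivity)
      have h2 : 1 / (4 * c) - (|θ| - c * θ ^ 2) = (2 * c * |θ| - 1) ^ 2 / (4 * c) := by
        field_simp
        rw [← sq_abs θ]
        ring
      have h3 : 0 ≤ (2 * c * |θ| - 1) ^ 2 / (4 * c) := by positivity
      linarith

lemma re_mul_ge (θ : ℝ) {u v : ℂ} (hu : ‖u‖ ≤ 1) (hv : ‖v‖ ≤ 1) :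
    θ ^ 2 / 2 - 3 ≤ ((θ + u) * (θ + v)).re := by
  have h1 : ((θ + u) * (θ + v)).re = θ ^ 2 + θ * u.re + θ * v.re + (u * v).re := by
    simp
    ring
  have h2 : |(u * v).re| ≤ 1 := (Complex.abs_re_le_norm _).trans (by
    rw [norm_mul]; exact mul_le_one₀ hu (norm_nonneg _) hv)
  have h3 := (Complex.abs_re_le_norm u).trans hu
  have h4 := (Complex.abs_re_le_norm v).trans hv
  rw [abs_le] at h2 h3 h4
  rw [h1]
  nlinarith [sq_nonneg (θ + u.re + v.re), sq_nonneg (u.re - v.re), sq_nonneg (θ + 2 * u.re),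
    sq_nonneg (θ + 2 * v.re)]

end Bounds

section Correlations

variable {Ω V : Type*} [MeasurableSpace Ω] [Fintype V] [DecidableEq V] {P : Measure Ω}
  {X : V → Ω → ℝ}

lemma exists_norm_le_of_circle {k : ℝ → ℂ} (hk : Continuous k)
    (hper : Function.Periodic k (2 * Real.pi)) : ∃ A, ∀ φ, ‖k φ‖ ≤ A := by
  obtain ⟨A, hA⟩ := (hper.compact_of_continuous Real.two_pi_pos.ne' hk).isBounded.exists_norm_le
  exact ⟨A, fun φ => hA _ ⟨φ, rfl⟩⟩

lemma exists_norm_truncKernel_le (m : ℕ) : ∃ A, ∀ φ, ‖truncKernel m φ‖ ≤ A :=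
  exists_norm_le_of_circle (continuous_truncKernel m) fun φ => by
    simp only [truncKernel, periodic_circleMap 0 2 φ]

/-- The multigraphs with all multiplicities at most `m` and all degrees at least `m`. -/
def boundedGraphs (V : Type*) [Fintype V] [DecidableEq V] (m : ℕ) : Finset (V × V → ℕ) :=
  (Fintype.piFinset fun _ => Finset.range (m + 1)).filter fun n => ∀ j, m ≤ degree n j

lemma prod_ite_degree_eq_sum (m : ℕ) (n : V × V → ℕ) (g : V × V → ℂ) :
    (if ∀ j, m ≤ degree n j then ∏ e, g e else 0) =
      ∑ n' ∈ boundedGraphs V m, ∏ e, if min (n e) m = n' e then g e else 0 := by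
  have h1 (n' : V × V → ℕ) : (∏ e, if min (n e) m = n' e then g e else 0) =
      if (fun e => min (n e) m) = n' then ∏ e, g e else 0 := by
    rw [Finset.prod_ite_zero]
    simp [funext_iff]
  simp_rw [h1]
  rw [Finset.sum_ite_eq]
  have h2 : (fun e => min (n e) m) ∈ boundedGraphs V m ↔ ∀ j, m ≤ degree n j := by
    simp only [boundedGraphs, Finset.mem_filter, Fintype.mem_piFinset, Finset.mem_range,
      le_degree_min_iff, and_iff_right_iff_imp]
    intro _ e
    omega
  simp_rw [h2]

/-- The norm bound on correlations at complex frequencies in terms of multigraphs. -/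
lemma norm_integral_prod_hFunC_le [IsProbabilityMeasure P]
    (hX : ∀ c : V → ℝ, ∃ v : NNReal, P.map (fun ω => ∑ j, c j * X j ω) = gaussianReal 0 v)
    {R : V → V → ℝ} (hR : ∀ i j, ∫ ω, X i ω * X j ω ∂P = R i j) (hpos : ∀ j, 0 < R j j) (m : ℕ)
    (z : V → ℂ) {A : ℝ} (hA : 1 ≤ A)
    (hz : ∀ e : V × V, Real.exp (-(edgeWeight R e * (z e.1 * z e.2).re)) ≤ A) :
    ‖∫ ω, ∏ j, hFunC m (z j) (X j ω) (R j j) ∂P‖ ≤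
      (∏ j, Real.exp (-(R j j * (z j ^ 2).re) / 2)) *
        ∑ n ∈ boundedGraphs V m, ∏ e, (|edgeWeight R e| * (‖z e.1‖ * ‖z e.2‖)) ^ n e * A := by
  set b : V × V → ℂ := fun e =>
    (edgeWeight R e : ℂ) * ((Complex.I * z e.1) * (Complex.I * z e.2)) with hb
  have hbre (e : V × V) : (b e).re = -(edgeWeight R e * (z e.1 * z e.2).re) := by
    have : b e = ((-edgeWeight R e : ℝ) : ℂ) * (z e.1 * z e.2) := by
      simp only [hb]
      push_cast
      linear_combination (edgeWeight R e : ℂ) * z e.1 * z e.2 * Complex.I_sq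
    rw [this, Complex.re_ofReal_mul, neg_mul]
  have hbnorm (e : V × V) : ‖b e‖ = |edgeWeight R e| * (‖z e.1‖ * ‖z e.2‖) := by
    simp [hb]
  obtain ⟨T, hT⟩ := exists_norm_truncKernel_le m
  have hT0 : 0 ≤ T := (norm_nonneg _).trans (hT 0)
  have h1 : ∫ ω, ∏ j, hFunC m (z j) (X j ω) (R j j) ∂P =
      ∫ n : V × V → ℕ, (∏ j, Complex.exp (-(R j j * z j ^ 2) / 2)) *
        ∑ n' ∈ boundedGraphs V m, ∏ e,
          (if min (n e) m = n' e then b e ^ n e / ((n e).factorial : ℂ) else 0)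
        ∂(Measure.pi fun _ => Measure.count) := by
    simp_rw [fun j x => hFunC_eq_integral m (hpos j) (z j) x]
    rw [integral_prod_integral_wickExp hX hR
      (k := fun j φ => Complex.exp (-(R j j * z j ^ 2) / 2) * truncKernel m φ)
      (w := fun j φ => Complex.I * z j * circleMap 0 2 φ)
      (fun j => continuous_const.mul (continuous_truncKernel m))
      (fun j => continuous_const.mul (continuous_circleMap 0 2))
      (A := (∑ j, ‖Complex.exp (-(R j j * z j ^ 2) / 2)‖) * T) (M := (∑ j, ‖z j‖) * 2)]
    · refine integral_congr_ae (.of_forall fun n => ?_)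
      simp only
      have h2 (j : V) : ∫ φ, Complex.exp (-(R j j * z j ^ 2) / 2) * truncKernel m φ *
          (Complex.I * z j * circleMap 0 2 φ) ^ degree n j ∂circleMeasure =
          Complex.exp (-(R j j * z j ^ 2) / 2) *
            (if m ≤ degree n j then (Complex.I * z j) ^ degree n j else 0) := by
        have h (φ : ℝ) : Complex.exp (-(R j j * z j ^ 2) / 2) * truncKernel m φ *
            (Complex.I * z j * circleMap 0 2 φ) ^ degree n j =
            Complex.exp (-(R j j * z j ^ 2) / 2) * (Complex.I * z j) ^ degree n j *
              (truncKernel m φ * circleMap 0 2 φ ^ degree n j) := by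
          rw [mul_pow]
          ring
        simp_rw [h]
        rw [integral_const_mul, integral_truncKernel_mul_pow, mul_assoc, mul_ite, mul_one, mul_zero]
      simp_rw [h2]
      rw [Finset.prod_mul_distrib, Finset.prod_ite_zero, ← prod_ite_degree_eq_sum,
        prod_pow_degree n (fun j => Complex.I * z j)]
      simp only [Finset.mem_univ, true_implies]
      split_ifs
      · rw [mul_left_comm, ← Finset.prod_mul_distrib]
        congr 1
        refine Finset.prod_congr rfl fun e _ => ?_
        rw [hb, mul_pow]
        ring
      · simp
    · intro j φ
      rw [norm_mul]
      refine mul_le_mul ?_ (hT φ) (norm_nonneg _) (Finset.sum_nonneg fun _ _ => norm_nonneg _)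
      exact Finset.single_le_sum (f := fun j => ‖Complex.exp (-(R j j * z j ^ 2) / 2)‖)
        (fun _ _ => norm_nonneg _) (Finset.mem_univ j)
    · intro j φ
      simp only [norm_mul, Complex.norm_I, one_mul, norm_circleMap_zero, abs_two]
      gcongr
      exact Finset.single_le_sum (f := fun j => ‖z j‖)
        (fun _ _ => norm_nonneg _) (Finset.mem_univ j)
  rw [h1, integral_const_mul, norm_mul, norm_prod]
  have h3 (j : V) : ‖Complex.exp (-(R j j * z j ^ 2) / 2)‖ =
      Real.exp (-(R j j * (z j ^ 2).re) / 2) := by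
    rw [Complex.norm_exp]
    congr 1
    have : (-(R j j * z j ^ 2) / 2 : ℂ) = ((-(R j j) / 2 : ℝ) : ℂ) * z j ^ 2 := by
      push_cast
      ring
    rw [this, Complex.re_ofReal_mul]
    ring
  simp_rw [h3]
  refine mul_le_mul_of_nonneg_left ?_ (Finset.prod_nonneg fun _ _ => (Real.exp_pos _).le)
  rw [integral_finsetSum]
  · refine norm_sum_le_of_le _ fun n hn => ?_
    rw [integral_fintype_prod_eq_prod (fun e (k : ℕ) =>
      if min k m = n e then b e ^ k / (k.factorial : ℂ) else 0), norm_prod]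
    refine Finset.prod_le_prod (fun _ _ => norm_nonneg _) fun e _ => ?_
    rw [← hbnorm]
    refine norm_integral_ite_min_eq_le ?_ hA (by rw [hbre]; exact hz e)
    have := Fintype.mem_piFinset.1 (Finset.mem_filter.1 hn).1 e
    simpa [Nat.lt_succ_iff] using this
  · intro n _
    exact Integrable.fintype_prod (f := fun e (k : ℕ) =>
      if min k m = n e then b e ^ k / (k.factorial : ℂ) else 0)
      fun e => integrable_ite_pow_div_factorial _ _

end Correlations

section WickSums

variable {Ω V : Type*} [MeasurableSpace Ω] [Fintype V] [DecidableEq V] {P : Measure Ω}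
  {X : V → Ω → ℝ}

/-- The value at degree `k` of the linear functional dual to `X^{⋄m} + X^{⋄(m+1)}`. -/
def wickCoeff (m k : ℕ) : ℝ :=
  (if m = k then (m.factorial : ℝ) else 0) + if m + 1 = k then ((m + 1).factorial : ℝ) else 0

lemma integral_inv_pow_mul_pow (m k : ℕ) :
    ∫ φ, (m.factorial : ℂ) * (circleMap 0 2 φ ^ m)⁻¹ * circleMap 0 2 φ ^ k ∂circleMeasure =
      if m = k then (m.factorial : ℂ) else 0 := by
  simp_rw [mul_assoc]
  rw [integral_const_mul, integral_circleMap_mul_inv_pow (F := fun z => z ^ k) (by fun_prop) 0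
    two_pos, iteratedDeriv_fun_pow_zero]
  have : (m.factorial : ℂ) ≠ 0 := by exact_mod_cast m.factorial_ne_zero
  split_ifs with h
  · subst h
    field_simp
  · simp

lemma wickCoeff_nonneg (m k : ℕ) : 0 ≤ wickCoeff m k := by
  unfold wickCoeff
  positivity

lemma wickCoeff_le (m k : ℕ) : wickCoeff m k ≤ m.factorial + (m + 1).factorial := by
  unfold wickCoeff
  gcongr <;> split_ifs <;> first | rfl | positivity

lemma one_le_wickCoeff {m k : ℕ} (h : m ≤ k ∧ k ≤ m + 1) : 1 ≤ wickCoeff m k := by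
  have h1 (n : ℕ) : (1 : ℝ) ≤ n.factorial := by exact_mod_cast n.factorial_pos
  unfold wickCoeff
  rcases h.1.eq_or_lt with rfl | h2
  · simpa using h1 m
  · obtain rfl : m + 1 = k := by omega
    simpa using h1 (m + 1)

lemma integrable_prod_edgeWeight_mul (R : V → V → ℝ) (m : ℕ) :
    Integrable (fun n : V × V → ℕ => (∏ e, edgeWeight R e ^ n e / ((n e).factorial : ℝ)) *
      ∏ j, wickCoeff m (degree n j)) (Measure.pi fun _ => Measure.count) := by
  have h1 : Integrable (fun n : V × V → ℕ =>
      ∏ e, (edgeWeight R e : ℂ) ^ n e / ((n e).factorial : ℂ))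
      (Measure.pi fun _ => Measure.count) :=
    Integrable.fintype_prod (f := fun e (n : ℕ) => (edgeWeight R e : ℂ) ^ n / (n.factorial : ℂ))
      fun e => integrable_pow_div_factorial _
  refine (h1.norm.mul_const (∏ _j : V, ((m.factorial : ℝ) + (m + 1).factorial))).mono'
    (by fun_prop) (.of_forall fun n => ?_)
  simp only [norm_mul, norm_prod, norm_div, norm_pow, Complex.norm_real,
    RCLike.norm_natCast]
  refine mul_le_mul_of_nonneg_left (Finset.prod_le_prod (fun _ _ => norm_nonneg _) fun j _ => ?_)
    (by positivity)
  rw [Real.norm_of_nonneg (wickCoeff_nonneg _ _)]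
  exact wickCoeff_le _ _

lemma integral_prod_wick_add_wick [IsProbabilityMeasure P]
    (hX : ∀ c : V → ℝ, ∃ v : NNReal, P.map (fun ω => ∑ j, c j * X j ω) = gaussianReal 0 v)
    {R : V → V → ℝ} (hR : ∀ i j, ∫ ω, X i ω * X j ω ∂P = R i j) (hpos : ∀ j, 0 < R j j) (m : ℕ) :
    ∫ ω, ∏ j, (wick (R j j) m (X j ω) + wick (R j j) (m + 1) (X j ω)) ∂P =
      ∫ n : V × V → ℕ, (∏ e, edgeWeight R e ^ n e / ((n e).factorial : ℝ)) *
        ∏ j, wickCoeff m (degree n j) ∂(Measure.pi fun _ => Measure.count) := by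
  have hc (n : ℕ) : Continuous fun φ => (n.factorial : ℂ) * (circleMap 0 2 φ ^ n)⁻¹ :=
    continuous_const.mul (continuous_inv_circleMap_pow two_pos n)
  set k : ℝ → ℂ := fun φ => (m.factorial : ℂ) * (circleMap 0 2 φ ^ m)⁻¹ +
    ((m + 1).factorial : ℂ) * (circleMap 0 2 φ ^ (m + 1))⁻¹ with hk
  have hkc : Continuous k := (hc m).add (hc (m + 1))
  obtain ⟨A, hA⟩ := exists_norm_le_of_circle hkc fun φ => by
    simp only [hk, periodic_circleMap 0 2 φ]
  have h1 (j : V) (x : ℝ) : ((wick (R j j) m x : ℝ) : ℂ) + (wick (R j j) (m + 1) x : ℝ) =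
      ∫ φ, k φ * wickExp (R j j) x (circleMap 0 2 φ) ∂circleMeasure := by
    have hw : Continuous fun φ => wickExp (R j j) x (circleMap 0 2 φ) :=
      (differentiable_wickExp _ x).continuous.comp (continuous_circleMap 0 2)
    rw [wick_eq_integral (hpos j), wick_eq_integral (hpos j), ← integral_add
      (integrable_circleMeasure ((hc m).fun_mul hw)) (integrable_circleMeasure ((hc (m + 1)).fun_mul hw))]
    simp only [hk, add_mul]
  have h2 (d : ℕ) : ∫ φ, k φ * circleMap 0 2 φ ^ d ∂circleMeasure = (wickCoeff m d : ℝ) := by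
    have hp : Continuous fun φ => circleMap 0 2 φ ^ d := (continuous_circleMap 0 2).pow d
    simp only [hk, add_mul]
    rw [integral_add (integrable_circleMeasure ((hc m).fun_mul hp))
      (integrable_circleMeasure ((hc (m + 1)).fun_mul hp)), integral_inv_pow_mul_pow,
      integral_inv_pow_mul_pow, wickCoeff]
    push_cast
    split_ifs <;> simp
  have h3 := integral_prod_integral_wickExp hX hR (k := fun _ => k)
    (w := fun _ φ => circleMap 0 2 φ) (fun _ => hkc) (fun _ => continuous_circleMap 0 2)
    (fun _ => hA) (M := 2) (fun _ φ => by simp)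
  simp_rw [h2, ← h1] at h3
  rw [← Complex.ofReal_inj, ← integral_complex_ofReal, ← integral_complex_ofReal]
  push_cast
  exact h3

variable {R : V → V → ℝ}

lemma integral_prod_wick_add_wick_nonneg [IsProbabilityMeasure P]
    (hX : ∀ c : V → ℝ, ∃ v : NNReal, P.map (fun ω => ∑ j, c j * X j ω) = gaussianReal 0 v)
    (hR : ∀ i j, ∫ ω, X i ω * X j ω ∂P = R i j) (hpos : ∀ j, 0 < R j j)
    (hW : ∀ e, 0 ≤ edgeWeight R e) (m : ℕ) :
    0 ≤ ∫ ω, ∏ j, (wick (R j j) m (X j ω) + wick (R j j) (m + 1) (X j ω)) ∂P := by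
  rw [integral_prod_wick_add_wick hX hR hpos]
  refine integral_nonneg fun n => mul_nonneg (Finset.prod_nonneg fun e _ => ?_)
    (Finset.prod_nonneg fun j _ => wickCoeff_nonneg _ _)
  have := hW e
  positivity

lemma prod_edgeWeight_pow_le [IsProbabilityMeasure P]
    (hX : ∀ c : V → ℝ, ∃ v : NNReal, P.map (fun ω => ∑ j, c j * X j ω) = gaussianReal 0 v)
    (hR : ∀ i j, ∫ ω, X i ω * X j ω ∂P = R i j) (hpos : ∀ j, 0 < R j j)
    (hW : ∀ e, 0 ≤ edgeWeight R e) (m : ℕ) {k : V × V → ℕ}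
    (hk : ∀ j, m ≤ degree k j ∧ degree k j ≤ m + 1) :
    ∏ e, edgeWeight R e ^ k e ≤ ((m + 1).factorial : ℝ) ^ Fintype.card (V × V) *
      ∫ ω, ∏ j, (wick (R j j) m (X j ω) + wick (R j j) (m + 1) (X j ω)) ∂P := by
  rw [integral_prod_wick_add_wick hX hR hpos]
  set F : (V × V → ℕ) → ℝ := fun n => (∏ e, edgeWeight R e ^ n e / ((n e).factorial : ℝ)) *
    ∏ j, wickCoeff m (degree n j) with hF
  have hF0 (n : V × V → ℕ) : 0 ≤ F n := by
    refine mul_nonneg (Finset.prod_nonneg fun e _ => ?_)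
      (Finset.prod_nonneg fun j _ => wickCoeff_nonneg _ _)
    have := hW e
    positivity
  have h1 : F k ≤ ∫ n, F n ∂(Measure.pi fun _ => Measure.count) := by
    have h2 : ∫ n in {k}, F n ∂(Measure.pi fun _ => Measure.count) = F k := by
      rw [integral_singleton, measureReal_def, ← Set.univ_pi_singleton, Measure.pi_pi]
      simp
    rw [← h2]
    exact setIntegral_le_integral (integrable_prod_edgeWeight_mul R m) (.of_forall hF0)
  refine le_trans ?_ (mul_le_mul_of_nonneg_left h1 (by positivity))
  have h3 : ∏ e, edgeWeight R e ^ k e ≤ ((m + 1).factorial : ℝ) ^ Fintype.card (V × V) *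
      ∏ e, edgeWeight R e ^ k e / ((k e).factorial : ℝ) := by
    rw [← Finset.card_univ, ← Finset.prod_const, ← Finset.prod_mul_distrib]
    refine Finset.prod_le_prod (fun e _ => pow_nonneg (hW e) _) fun e _ => ?_
    have h4 : ((k e).factorial : ℝ) ≤ (m + 1).factorial := by
      exact_mod_cast Nat.factorial_le ((le_degree k e).trans (hk e.1).2)
    rw [mul_div_assoc', le_div_iff₀ (by positivity), mul_comm]
    exact mul_le_mul_of_nonneg_right h4 (pow_nonneg (hW e) _)
  refine h3.trans (mul_le_mul_of_nonneg_left ?_ (by positivity))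
  refine le_mul_of_one_le_right (Finset.prod_nonneg fun e _ => ?_) ?_
  · have := hW e
    positivity
  · exact Finset.one_le_prod fun j _ => one_le_wickCoeff (hk j)

end WickSums

lemma edgeWeight_nonneg {V : Type*} [DecidableEq V] {R : V → V → ℝ}
    (hnn : ∀ i j, 0 ≤ R i j) (e : V × V) : 0 ≤ edgeWeight R e := by
  unfold edgeWeight
  split_ifs
  · rfl
  · have := hnn e.1 e.2
    positivity

lemma edgeWeight_le {V : Type*} [DecidableEq V] {R : V → V → ℝ} {Λ : ℝ}
    (hnn : ∀ i j, 0 ≤ R i j) (hle : ∀ i j, R i j ≤ Λ) (e : V × V) :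
    edgeWeight R e ≤ Λ / 2 := by
  have h1 := hnn e.1 e.2
  have h2 := hle e.1 e.2
  unfold edgeWeight
  split_ifs <;> linarith

section Main

variable {Ω V : Type*} [MeasurableSpace Ω] [Fintype V] [DecidableEq V] {P : Measure Ω}
  {X : V → Ω → ℝ} {R : V → V → ℝ}

lemma prod_edgeWeight_pow_le_of_mem_boundedGraphs [IsProbabilityMeasure P]
    (hX : ∀ c : V → ℝ, ∃ v : NNReal, P.map (fun ω => ∑ j, c j * X j ω) = gaussianReal 0 v)
    (hR : ∀ i j, ∫ ω, X i ω * X j ω ∂P = R i j) (hpos : ∀ i j, 0 < R i j) {C : ℝ} (hC : 1 ≤ C)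
    (hle : ∀ i j, R i j ≤ C) (htri : ∀ v a b, R v a * R v b ≤ C * R a b) {m : ℕ}
    {n : V × V → ℕ} (hn : n ∈ boundedGraphs V m) :
    ∏ e, edgeWeight R e ^ n e ≤ C ^ (m * Fintype.card (V × V)) *
      ((m + 1).factorial : ℝ) ^ Fintype.card (V × V) *
      ∫ ω, ∏ j, (wick (R j j) m (X j ω) + wick (R j j) (m + 1) (X j ω)) ∂P := by
  have hnn (i j : V) : 0 ≤ R i j := (hpos i j).le
  have hW := edgeWeight_nonneg hnn
  have hC0 : 0 ≤ C := zero_le_one.trans hC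
  obtain ⟨hn1, hn2⟩ := Finset.mem_filter.1 hn
  by_cases hdiag : ∀ e : V × V, e.1 = e.2 → n e = 0
  · have hsymm (a b : V) : edgeWeight R (a, b) = edgeWeight R (b, a) := by
      have : R a b = R b a := by rw [← hR, ← hR]; simp_rw [mul_comm]
      simp only [edgeWeight, this, eq_comm]
    have htri' (v a b : V) (hab : a ≠ b) :
        edgeWeight R (v, a) * edgeWeight R (v, b) ≤ C * edgeWeight R (a, b) := by
      have h1 := htri v a b
      have h2 : 0 ≤ C * R a b := mul_nonneg hC0 (hnn a b)
      simp only [edgeWeight, hab, if_false]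
      split_ifs <;> nlinarith
    obtain ⟨k, hk1, hk2⟩ := exists_degree_mem_of_degree_ge (edgeWeight R) hC m hsymm hW
      (fun e => (edgeWeight_le hnn hle e).trans (by linarith)) htri' n hdiag hn2
    refine hk2.trans ?_
    rw [mul_assoc]
    refine mul_le_mul ?_ (prod_edgeWeight_pow_le hX hR (fun j => hpos j j) hW m hk1)
      (Finset.prod_nonneg fun e _ => pow_nonneg (hW e) _) (by positivity)
    refine pow_le_pow_right₀ hC ?_
    have h3 : ∑ e, n e ≤ Finset.card (Finset.univ : Finset (V × V)) • m :=
      Finset.sum_le_card_nsmul _ _ _ fun e _ => by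
        simpa [Nat.lt_succ_iff] using Fintype.mem_piFinset.1 hn1 e
    rwa [smul_eq_mul, mul_comm] at h3
  · push Not at hdiag
    obtain ⟨e, he, hne⟩ := hdiag
    rw [Finset.prod_eq_zero (Finset.mem_univ e) (by simp [edgeWeight, he, hne])]
    exact mul_nonneg (by positivity)
      (integral_prod_wick_add_wick_nonneg hX hR (fun j => hpos j j) hW m)

/-- The constant of the correlation bound at complex frequencies on the unit circle around a real
frequency. -/
def circleConst (V : Type*) [Fintype V] (Λ C : ℝ) (m : ℕ) : ℝ :=
  Real.exp (3 * Λ / 2) ^ Fintype.card V * Real.exp (2 * Λ) ^ Fintype.card (V × V) *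
    ((2 * (m * Fintype.card (V × V))).factorial * Real.exp (1 + Λ)) *
    ((m + 1 : ℝ) ^ Fintype.card (V × V) *
      (C ^ (m * Fintype.card (V × V)) * ((m + 1).factorial : ℝ) ^ Fintype.card (V × V)))

lemma card_boundedGraphs_le (m : ℕ) :
    ((boundedGraphs V m).card : ℝ) ≤ (m + 1 : ℝ) ^ Fintype.card (V × V) := by
  have h : (boundedGraphs V m).card ≤ (m + 1) ^ Fintype.card (V × V) :=
    (Finset.card_filter_le _ _).trans_eq (by simp)
  exact_mod_cast h

lemma norm_integral_prod_hFunC_circleMap_le [IsProbabilityMeasure P] [Nonempty V]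
    (hX : ∀ c : V → ℝ, ∃ v : NNReal, P.map (fun ω => ∑ j, c j * X j ω) = gaussianReal 0 v)
    (hR : ∀ i j, ∫ ω, X i ω * X j ω ∂P = R i j) (hpos : ∀ i j, 0 < R i j) {Λ C : ℝ} (hΛ : 0 < Λ)
    (hdiag : ∀ j, 1 / Λ ≤ R j j) (hle : ∀ i j, R i j ≤ Λ) (hC : 1 ≤ C) (hΛC : Λ ≤ C)
    (htri : ∀ v a b, R v a * R v b ≤ C * R a b) (m : ℕ) (θ : ℝ) (φ : V → ℝ) :
    ‖∫ ω, ∏ j, hFunC m (circleMap θ 1 (φ j)) (X j ω) (R j j) ∂P‖ ≤ circleConst V Λ C m *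
      ∫ ω, ∏ j, (wick (R j j) m (X j ω) + wick (R j j) (m + 1) (X j ω)) ∂P := by
  have hnn (i j : V) : 0 ≤ R i j := (hpos i j).le
  have hW := edgeWeight_nonneg hnn
  set N := Fintype.card (V × V) with hN
  set I := ∫ ω, ∏ j, (wick (R j j) m (X j ω) + wick (R j j) (m + 1) (X j ω)) ∂P with hI
  have hI0 : 0 ≤ I := integral_prod_wick_add_wick_nonneg hX hR (fun j => hpos j j) hW m
  have hz (j : V) : circleMap θ 1 (φ j) = θ + circleMap 0 1 (φ j) := by simp [circleMap]
  have hu (j : V) : ‖circleMap 0 1 (φ j)‖ ≤ 1 := by simp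
  have hre (i j : V) :
      θ ^ 2 / 2 - 3 ≤ (circleMap θ 1 (φ i) * circleMap θ 1 (φ j)).re := by
    rw [hz, hz]
    exact re_mul_ge θ (hu i) (hu j)
  have hnorm (j : V) : ‖circleMap θ 1 (φ j)‖ ≤ 1 + |θ| := by
    rw [hz, add_comm]
    exact (norm_add_le _ _).trans (add_le_add (hu j) (by simp))
  refine (norm_integral_prod_hFunC_le hX hR (fun j => hpos j j) m _ (A := Real.exp (2 * Λ))
    (Real.one_le_exp (by positivity)) fun e => Real.exp_le_exp.2 ?_).trans ?_
  · have h1 := hre e.1 e.2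
    have h2 := edgeWeight_le hnn hle e
    nlinarith [hW e, sq_nonneg θ]
  have hexp : ∏ j, Real.exp (-(R j j * (circleMap θ 1 (φ j) ^ 2).re) / 2) ≤
      Real.exp (3 * Λ / 2) ^ Fintype.card V * Real.exp (-(1 / (4 * Λ) * θ ^ 2)) := by
    have h1 (j : V) : Real.exp (-(R j j * (circleMap θ 1 (φ j) ^ 2).re) / 2) ≤
        Real.exp (3 * Λ / 2) * Real.exp (-(1 / (4 * Λ) * θ ^ 2)) := by
      rw [← Real.exp_add, Real.exp_le_exp]
      have h2 := hre j j
      rw [← sq] at h2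
      have h3 := mul_le_mul_of_nonneg_left h2 (hnn j j)
      have h4 := mul_le_mul_of_nonneg_right (hdiag j) (sq_nonneg θ)
      have h5 := hle j j
      have h6 : 1 / (4 * Λ) * θ ^ 2 = 1 / Λ * θ ^ 2 / 4 := by ring
      rw [h6]
      linarith
    calc ∏ j, Real.exp (-(R j j * (circleMap θ 1 (φ j) ^ 2).re) / 2)
        ≤ ∏ _j : V, Real.exp (3 * Λ / 2) * Real.exp (-(1 / (4 * Λ) * θ ^ 2)) :=
          Finset.prod_le_prod (fun _ _ => (Real.exp_pos _).le) fun j _ => h1 j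
      _ = Real.exp (3 * Λ / 2) ^ Fintype.card V *
          Real.exp (-(1 / (4 * Λ) * θ ^ 2)) ^ Fintype.card V := by
        rw [Finset.prod_const, mul_pow, Finset.card_univ]
      _ ≤ Real.exp (3 * Λ / 2) ^ Fintype.card V * Real.exp (-(1 / (4 * Λ) * θ ^ 2)) := by
        refine mul_le_mul_of_nonneg_left ?_ (by positivity)
        refine pow_le_of_le_one (Real.exp_pos _).le ?_ Fintype.card_ne_zero
        rw [Real.exp_le_one_iff]
        have : 0 ≤ 1 / (4 * Λ) * θ ^ 2 := by positivity
        linarith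
  have hterm (n) (hn : n ∈ boundedGraphs V m) :
      ∏ e : V × V, (|edgeWeight R e| *
        (‖circleMap θ 1 (φ e.1)‖ * ‖circleMap θ 1 (φ e.2)‖)) ^ n e * Real.exp (2 * Λ) ≤
      (1 + |θ|) ^ (2 * (m * N)) * Real.exp (2 * Λ) ^ N *
        (C ^ (m * N) * ((m + 1).factorial : ℝ) ^ N * I) := by
    have h1 : ∏ e : V × V, (|edgeWeight R e| *
        (‖circleMap θ 1 (φ e.1)‖ * ‖circleMap θ 1 (φ e.2)‖)) ^ n e * Real.exp (2 * Λ) ≤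
        ∏ e : V × V, edgeWeight R e ^ n e * ((1 + |θ|) ^ (2 * m) * Real.exp (2 * Λ)) := by
      refine Finset.prod_le_prod (fun e _ => by positivity) fun e _ => ?_
      rw [abs_of_nonneg (hW e), mul_pow, mul_assoc]
      refine mul_le_mul_of_nonneg_left ?_ (pow_nonneg (hW e) _)
      refine mul_le_mul_of_nonneg_right ?_ (Real.exp_pos _).le
      have h2 : n e ≤ m := by
        simpa [Nat.lt_succ_iff] using Fintype.mem_piFinset.1 (Finset.mem_filter.1 hn).1 e
      rw [pow_mul, sq]
      calc (‖circleMap θ 1 (φ e.1)‖ * ‖circleMap θ 1 (φ e.2)‖) ^ n e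
          ≤ ((1 + |θ|) * (1 + |θ|)) ^ n e := by
            gcongr
            · exact hnorm _
            · exact hnorm _
        _ ≤ ((1 + |θ|) * (1 + |θ|)) ^ m :=
            pow_le_pow_right₀ (by nlinarith [abs_nonneg θ]) h2
    refine h1.trans ?_
    rw [Finset.prod_mul_distrib, Finset.prod_const, Finset.card_univ, ← hN, mul_pow, ← pow_mul,
      mul_comm, mul_assoc 2 m N]
    exact mul_le_mul_of_nonneg_left (prod_edgeWeight_pow_le_of_mem_boundedGraphs hX hR hpos hC
      (fun i j => (hle i j).trans hΛC) htri hn) (by positivity)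
  have hC0 : 0 ≤ C := zero_le_one.trans hC
  calc (∏ j, Real.exp (-(R j j * (circleMap θ 1 (φ j) ^ 2).re) / 2)) *
        ∑ n ∈ boundedGraphs V m, ∏ e : V × V, (|edgeWeight R e| *
          (‖circleMap θ 1 (φ e.1)‖ * ‖circleMap θ 1 (φ e.2)‖)) ^ n e * Real.exp (2 * Λ)
      ≤ (Real.exp (3 * Λ / 2) ^ Fintype.card V * Real.exp (-(1 / (4 * Λ) * θ ^ 2))) *
        ((m + 1 : ℝ) ^ N * ((1 + |θ|) ^ (2 * (m * N)) * Real.exp (2 * Λ) ^ N *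
          (C ^ (m * N) * ((m + 1).factorial : ℝ) ^ N * I))) := by
        refine mul_le_mul hexp ?_ (Finset.sum_nonneg fun _ _ => by positivity) (by positivity)
        refine (Finset.sum_le_card_nsmul _ _ _ hterm).trans ?_
        rw [nsmul_eq_mul]
        exact mul_le_mul_of_nonneg_right (card_boundedGraphs_le m) (by positivity)
    _ = ((1 + |θ|) ^ (2 * (m * N)) * Real.exp (-(1 / (4 * Λ) * θ ^ 2))) *
        (Real.exp (3 * Λ / 2) ^ Fintype.card V * Real.exp (2 * Λ) ^ N *
          ((m + 1 : ℝ) ^ N * (C ^ (m * N) * ((m + 1).factorial : ℝ) ^ N)) * I) := by ring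
    _ ≤ ((2 * (m * N)).factorial * Real.exp (1 + Λ)) *
        (Real.exp (3 * Λ / 2) ^ Fintype.card V * Real.exp (2 * Λ) ^ N *
          ((m + 1 : ℝ) ^ N * (C ^ (m * N) * ((m + 1).factorial : ℝ) ^ N)) * I) := by
        refine mul_le_mul_of_nonneg_right ?_ (by positivity)
        have h := one_add_abs_pow_mul_exp_le (c := 1 / (4 * Λ)) (by positivity) θ (2 * (m * N))
        have h' : 1 / (4 * (1 / (4 * Λ))) = Λ := by field_simp
        rwa [h'] at h
    _ = circleConst V Λ C m * I := by rw [circleConst]; ring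

lemma continuous_hFunC_circleMap (m : ℕ) (θ a : ℝ) :
    Continuous fun p : ℝ × ℝ => hFunC m (circleMap θ 1 p.1) p.2 a := by
  have h1 : Continuous (circleMap θ 1) := continuous_circleMap _ _
  have h2 (n : ℕ) : Continuous fun x : ℝ => wick a n x :=
    continuous_const.mul ((Polynomial.continuous_aeval _).comp (continuous_id.div_const _))
  unfold hFunC
  fun_prop

lemma norm_hFunC_circleMap_le (m : ℕ) {a : ℝ} (ha : 0 < a) (θ : ℝ) :
    ∃ C, ∀ φ x, ‖hFunC m (circleMap θ 1 φ) x a‖ ≤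
      C * (Real.exp (2 * (|θ| + 1) * x) + Real.exp (-(2 * (|θ| + 1) * x))) := by
  obtain ⟨T, hT⟩ := exists_norm_truncKernel_le m
  have hz (φ : ℝ) : ‖circleMap θ 1 φ‖ ≤ |θ| + 1 := by
    have : circleMap θ 1 φ = θ + circleMap 0 1 φ := by simp [circleMap]
    rw [this]
    exact (norm_add_le _ _).trans (by simp)
  obtain ⟨E, hE⟩ := exists_norm_le_of_circle
    (k := fun φ => Complex.exp (-(a * circleMap θ 1 φ ^ 2) / 2))
    (by have := continuous_circleMap θ 1; fun_prop)
    fun φ => by simp only [periodic_circleMap (θ : ℂ) 1 φ]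
  refine ⟨E * T * Real.exp ((2 * (|θ| + 1)) ^ 2 * |a|), fun φ x => ?_⟩
  rw [hFunC_eq_integral m ha]
  refine (norm_integral_le_of_norm_le_const (C := E * T * Real.exp ((2 * (|θ| + 1)) ^ 2 * |a|) *
    (Real.exp (2 * (|θ| + 1) * x) + Real.exp (-(2 * (|θ| + 1) * x)))) (.of_forall fun ψ => ?_)).trans
    (by simp)
  rw [norm_mul, norm_mul, mul_assoc (E * T)]
  have hE0 : 0 ≤ E := (norm_nonneg _).trans (hE φ)
  refine mul_le_mul (mul_le_mul (hE φ) (hT ψ) (norm_nonneg _) hE0) (norm_wickExp_le ?_ x)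
    (norm_nonneg _) (mul_nonneg hE0 ((norm_nonneg _).trans (hT ψ)))
  simp only [norm_mul, Complex.norm_I, one_mul, norm_circleMap_zero, abs_two]
  linarith [hz φ]

lemma norm_integral_prod_iteratedDeriv_hFun_le [IsProbabilityMeasure P] [Nonempty V]
    (hX : ∀ c : V → ℝ, ∃ v : NNReal, P.map (fun ω => ∑ j, c j * X j ω) = gaussianReal 0 v)
    (hR : ∀ i j, ∫ ω, X i ω * X j ω ∂P = R i j) (hpos : ∀ i j, 0 < R i j) {Λ C : ℝ} (hΛ : 0 < Λ)
    (hdiag : ∀ j, 1 / Λ ≤ R j j) (hle : ∀ i j, R i j ≤ Λ) (hC : 1 ≤ C) (hΛC : Λ ≤ C)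
    (htri : ∀ v a b, R v a * R v b ≤ C * R a b) (m r : ℕ) (θ : ℝ) :
    ‖∫ ω, ∏ j, iteratedDeriv r (fun t => hFun m t (X j ω) (R j j)) θ ∂P‖ ≤
      (r.factorial : ℝ) ^ Fintype.card V * circleConst V Λ C m *
        ∫ ω, ∏ j, (wick (R j j) m (X j ω) + wick (R j j) (m + 1) (X j ω)) ∂P := by
  choose D hD using fun j => norm_hFunC_circleMap_le m (hpos j j) θ
  simp_rw [iteratedDeriv_hFun_eq_integral]
  rw [integral_prod_integral_swap hX (f := fun j φ x =>
      (r.factorial : ℂ) * (circleMap 0 1 φ ^ r)⁻¹ * hFunC m (circleMap θ 1 φ) x (R j j))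
    (fun j => ((continuous_const.mul (continuous_inv_circleMap_pow one_pos r)).comp
      continuous_fst).mul (continuous_hFunC_circleMap m θ _))
    (fun j => r.factorial * D j) (2 * (|θ| + 1))]
  swap
  · intro j φ x
    simp only [norm_mul, norm_inv, norm_pow, norm_circleMap_zero, abs_one, one_pow, inv_one,
      mul_one, Complex.norm_natCast]
    rw [mul_assoc]
    exact mul_le_mul_of_nonneg_left (hD j φ x) (by positivity)
  refine (norm_integral_le_of_norm_le_const (C := (r.factorial : ℝ) ^ Fintype.card V *
    circleConst V Λ C m * ∫ ω, ∏ j, (wick (R j j) m (X j ω) + wick (R j j) (m + 1) (X j ω)) ∂P)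
    (.of_forall fun φ => ?_)).trans (by simp)
  simp_rw [Finset.prod_mul_distrib]
  rw [integral_const_mul, norm_mul, mul_assoc (_ ^ _)]
  refine mul_le_mul (le_of_eq ?_) (norm_integral_prod_hFunC_circleMap_le hX hR hpos hΛ hdiag hle hC
    hΛC htri m θ φ) (norm_nonneg _) (by positivity)
  simp

end Main

section Covariance

variable {d : ℕ} {s : Fin d → ℝ}

lemma anorm_nonneg (s x : Fin d → ℝ) : 0 ≤ anorm s x :=
  Finset.sum_nonneg fun _ _ => by positivity

lemma anorm_zero (hs : ∀ j, 1 ≤ s j) : anorm s 0 = 0 := by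
  refine Finset.sum_eq_zero fun j _ => ?_
  have := hs j
  rw [Pi.zero_apply, abs_zero, Real.zero_rpow (by positivity)]

lemma anorm_sub_comm (s x y : Fin d → ℝ) : anorm s (x - y) = anorm s (y - x) := by
  simp only [anorm, Pi.sub_apply, abs_sub_comm]

lemma anorm_add_le (hs : ∀ j, 1 ≤ s j) (x y : Fin d → ℝ) :
    anorm s (x + y) ≤ anorm s x + anorm s y := by
  rw [anorm, anorm, anorm, ← Finset.sum_add_distrib]
  refine Finset.sum_le_sum fun j _ => ?_
  have h1 : 0 ≤ 1 / s j := one_div_nonneg.2 (zero_le_one.trans (hs j))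
  have h2 : 1 / s j ≤ 1 := (div_le_one (zero_lt_one.trans_le (hs j))).2 (hs j)
  exact (Real.rpow_le_rpow (abs_nonneg _) (abs_add_le (x j) (y j)) h1).trans
    (Real.rpow_add_le_add_rpow (abs_nonneg _) (abs_nonneg _) h1 h2)

/-- The profile `ε^α / (|x|_s + ε)^α` appearing in the covariance bound. -/
def profile (s : Fin d → ℝ) (α ε : ℝ) (x : Fin d → ℝ) : ℝ := ε ^ α / (anorm s x + ε) ^ α

variable {α ε : ℝ}

lemma profile_pos (hε : 0 < ε) (x : Fin d → ℝ) : 0 < profile s α ε x := by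
  have h := anorm_nonneg s x
  unfold profile
  positivity

lemma profile_zero (hs : ∀ j, 1 ≤ s j) (hε : 0 < ε) : profile s α ε 0 = 1 := by
  rw [profile, anorm_zero hs, zero_add, div_self (by positivity)]

lemma profile_le_one (hα : 0 ≤ α) (hε : 0 < ε) (x : Fin d → ℝ) : profile s α ε x ≤ 1 := by
  have h := anorm_nonneg s x
  rw [profile, div_le_one (by positivity)]
  exact Real.rpow_le_rpow hε.le (by linarith) hα

lemma profile_le_of_anorm_le (hα : 0 ≤ α) (hε : 0 < ε) {x y : Fin d → ℝ}
    (h : anorm s y ≤ 2 * anorm s x) : profile s α ε x ≤ 2 ^ α * profile s α ε y := by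
  have hx := anorm_nonneg s x
  have hy := anorm_nonneg s y
  rw [profile, profile, mul_div_assoc', div_le_div_iff₀ (by positivity) (by positivity),
    mul_comm (2 ^ α), mul_assoc, ← Real.mul_rpow zero_le_two (by positivity)]
  refine mul_le_mul_of_nonneg_left (Real.rpow_le_rpow (by positivity) ?_ hα) (by positivity)
  linarith

lemma profile_mul_profile_le (hs : ∀ j, 1 ≤ s j) (hα : 0 ≤ α) (hε : 0 < ε) (v a b : Fin d → ℝ) :
    profile s α ε (v - a) * profile s α ε (v - b) ≤ 2 ^ α * profile s α ε (a - b) := by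
  have htri : anorm s (a - b) ≤ anorm s (v - a) + anorm s (v - b) := by
    rw [anorm_sub_comm s v a, ← sub_add_sub_cancel a v b]
    exact anorm_add_le hs _ _
  rcases le_total (anorm s (v - b)) (anorm s (v - a)) with h | h
  · exact (mul_le_of_le_one_right (profile_pos hε _).le (profile_le_one hα hε _)).trans
      (profile_le_of_anorm_le hα hε (by linarith))
  · exact (mul_le_of_le_one_left (profile_pos hε _).le (profile_le_one hα hε _)).trans
      (profile_le_of_anorm_le hα hε (by linarith))

variable {Λ : ℝ} {R : (Fin d → ℝ) → (Fin d → ℝ) → ℝ}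

lemma CovBound.profile_le (h : CovBound s α Λ ε R) (x y : Fin d → ℝ) :
    profile s α ε (x - y) / Λ ≤ R x y := by
  refine le_of_eq_of_le ?_ (h x y).1
  rw [profile, div_div, mul_comm Λ]

lemma CovBound.le_profile (h : CovBound s α Λ ε R) (x y : Fin d → ℝ) :
    R x y ≤ Λ * profile s α ε (x - y) :=
  (h x y).2.trans_eq (mul_div_assoc _ _ _)

lemma CovBound.mul_le (h : CovBound s α Λ ε R) (hs : ∀ j, 1 ≤ s j) (hα : 0 ≤ α) (hε : 0 < ε)
    (hΛ : 0 < Λ) (v a b : Fin d → ℝ) : R v a * R v b ≤ Λ ^ 3 * 2 ^ α * R a b := by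
  have h0 : 0 ≤ R v b := (div_pos (profile_pos hε _) hΛ).le.trans (h.profile_le v b)
  have h1 := profile_pos (s := s) (α := α) hε (v - a)
  calc R v a * R v b ≤ (Λ * profile s α ε (v - a)) * (Λ * profile s α ε (v - b)) :=
        mul_le_mul (h.le_profile v a) (h.le_profile v b) h0 (by positivity)
    _ = Λ ^ 2 * (profile s α ε (v - a) * profile s α ε (v - b)) := by ring
    _ ≤ Λ ^ 2 * (2 ^ α * profile s α ε (a - b)) := by
        exact mul_le_mul_of_nonneg_left (profile_mul_profile_le hs hα hε v a b) (by positivity)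
    _ = Λ ^ 3 * 2 ^ α * (profile s α ε (a - b) / Λ) := by field_simp
    _ ≤ Λ ^ 3 * 2 ^ α * R a b := by
        gcongr
        exact h.profile_le a b

end Covariance

/-- Theorem 1.1: uniform multi-point correlation bound
`|E ∏_j ∂_θ^r 𝓗_m(e^{iθΦ_ε(x_j)})| ≤ C · E ∏_j (Φ_ε(x_j)^{⋄m} + Φ_ε(x_j)^{⋄(m+1)})`,
with `C` depending only on `d, s, α, Λ, K, m, r`. -/
theorem stmt0 (d : ℕ) (hd : 1 ≤ d) (s : Fin d → ℝ) (hs : ∀ j, 1 ≤ s j)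
    (α Λ : ℝ) (hα : 0 < α) (hα' : α < ∑ j, s j) (hΛ : 1 < Λ)
    (K : ℕ) (hK : 1 ≤ K) (m r : ℕ) :
    ∃ C > 0, ∀ ε ∈ Set.Ioo (0:ℝ) 1,
      ∀ (Ω : Type) (_ : MeasurableSpace Ω) (P : Measure Ω), IsProbabilityMeasure P →
      ∀ Φ : (Fin d → ℝ) → Ω → ℝ,
        IsCenteredGaussianFamily P Φ →
        CovBound s α Λ ε (fun x y => ∫ ω, Φ x ω * Φ y ω ∂P) →
        ∀ (θ : ℝ) (x : Fin K → Fin d → ℝ),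
          ‖∫ ω, ∏ j, iteratedDeriv r
              (fun t => hFun m t (Φ (x j) ω) (∫ ω', Φ (x j) ω' ^ 2 ∂P)) θ ∂P‖ ≤
            C * ∫ ω, ∏ j,
              (wick (∫ ω', Φ (x j) ω' ^ 2 ∂P) m (Φ (x j) ω) +
                wick (∫ ω', Φ (x j) ω' ^ 2 ∂P) (m + 1) (Φ (x j) ω)) ∂P := by
  have hΛ0 : 0 < Λ := zero_lt_one.trans hΛ
  have h2 : (1 : ℝ) ≤ 2 ^ α := Real.one_le_rpow one_le_two hα.le
  have hΛC : Λ ≤ Λ ^ 3 * 2 ^ α :=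
    (le_self_pow₀ hΛ.le three_ne_zero).trans (le_mul_of_one_le_right (by positivity) h2)
  have : Nonempty (Fin K) := ⟨⟨0, hK⟩⟩
  refine ⟨(r.factorial : ℝ) ^ Fintype.card (Fin K) * circleConst (Fin K) Λ (Λ ^ 3 * 2 ^ α) m, ?_, ?_⟩
  · unfold circleConst
    positivity
  intro ε hε Ω _ P _ Φ hΦ hcov θ x
  have hε0 : 0 < ε := hε.1
  have hsq (j : Fin K) : ∫ ω, Φ (x j) ω ^ 2 ∂P = ∫ ω, Φ (x j) ω * Φ (x j) ω ∂P := by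
    simp_rw [sq]
  simp_rw [hsq]
  refine norm_integral_prod_iteratedDeriv_hFun_le (X := fun j => Φ (x j))
    (R := fun i j => ∫ ω, Φ (x i) ω * Φ (x j) ω ∂P) (hΦ.map_sum_eq x) (fun _ _ => rfl)
    (fun i j => (div_pos (profile_pos hε0 _) hΛ0).trans_le (hcov.profile_le (x i) (x j))) hΛ0
    (fun j => ?_) (fun i j => ?_) (hΛ.le.trans hΛC) hΛC
    (fun v a b => hcov.mul_le hs hα.le hε0 hΛ0 (x v) (x a) (x b)) m r θ
  · have h := hcov.profile_le (x j) (x j)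
    rwa [sub_self, profile_zero hs hε0] at h
  · exact (hcov.le_profile (x i) (x j)).trans
      (mul_le_of_le_one_right hΛ0.le (profile_le_one hα.le hε0 _))
end
end

section
/- Let K ≥ 1, m, r ∈ ℕ and Λ > 1. There exists C > 0, depending only on K, m, r and Λ, such that for every collection (X₁, …, X_K) of centered jointly Gaussian real random variables with E X_j² ∈ [Λ^{−1}, Λ] for every j, and every θ ∈ ℝ, one has |E ∏_{j=1}^{K} ∂_θ^r 𝓗_m(e^{iθX_j})| ≤ C, where |·| is the complex modulus. In particular the bound is uniform in θ ∈ ℝ. -/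
open MeasureTheory ProbabilityTheory Filter

noncomputable section

/-- The product of `K ≥ 1` nonnegative reals is at most the sum of their `K`-th powers. -/
lemma prod_le_sum_pow {K : ℕ} (hK : 1 ≤ K) {f : Fin K → ℝ} (hf : ∀ j, 0 ≤ f j) :
    ∏ j, f j ≤ ∑ j, f j ^ K := by
  have : Nonempty (Fin K) := ⟨⟨0, hK⟩⟩
  obtain ⟨i, -, hi⟩ := Finset.exists_max_image Finset.univ f Finset.univ_nonempty
  calc ∏ j, f j ≤ ∏ _j : Fin K, f i := Finset.prod_le_prod (fun j _ => hf j) hi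
    _ = f i ^ K := by simp
    _ ≤ ∑ j, f j ^ K :=
        Finset.single_le_sum (f := fun j => f j ^ K) (fun j _ => pow_nonneg (hf j) K)
          (Finset.mem_univ i)

lemma one_add_abs_pow_le (M : ℕ) (x : ℝ) :
    (1 + |x|) ^ M ≤ (M.factorial * Real.exp 1) * (Real.exp x + Real.exp (-x)) := by
  have h := Real.pow_div_factorial_le_exp (1 + |x|) (by positivity) M
  rw [div_le_iff₀ (by positivity), Real.exp_add] at h
  have h2 : Real.exp |x| ≤ Real.exp x + Real.exp (-x) := by
    rcases abs_choice x with hx | hx <;> rw [hx] <;>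
      linarith [Real.exp_pos x, Real.exp_pos (-x)]
  calc (1 + |x|) ^ M ≤ (M.factorial * Real.exp 1) * Real.exp |x| := by linarith
    _ ≤ _ := by gcongr

lemma integrable_exp_and_integral_le {Ω ι : Type*} [MeasurableSpace Ω] {P : Measure Ω}
    {X : ι → Ω → ℝ} (hX : IsCenteredGaussianFamily P X) (j : ι) {L : ℝ}
    (hL : ∫ ω, X j ω ^ 2 ∂P ≤ L) :
    Integrable (fun ω => Real.exp (X j ω) + Real.exp (-X j ω)) P ∧
      ∫ ω, (Real.exp (X j ω) + Real.exp (-X j ω)) ∂P ≤ 2 * Real.exp (L / 2) := by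
  obtain ⟨v, hv⟩ := hX {j} fun _ => 1
  simp only [Finset.sum_singleton, one_mul] at hv
  have hmeas : AEMeasurable (X j) P := by
    by_contra h
    rw [Measure.map_of_not_aemeasurable h] at hv
    exact IsProbabilityMeasure.ne_zero (gaussianReal 0 v) hv.symm
  have hvar : ∫ ω, X j ω ^ 2 ∂P = v := by
    have h1 : ∫ x, x ^ 2 ∂(gaussianReal 0 v) = v := by
      have h2 := variance_id_gaussianReal (μ := 0) (v := v)
      rw [variance_eq_integral aemeasurable_id] at h2
      simpa using h2
    rw [← h1, ← hv, integral_map hmeas (by fun_prop)]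
  have hint : ∀ t : ℝ, Integrable (fun ω => Real.exp (t * X j ω)) P := fun t => by
    have h := integrable_exp_mul_gaussianReal (μ := 0) (v := v) t
    rw [← hv] at h
    exact h.comp_aemeasurable hmeas
  have hmgf : ∀ t : ℝ, ∫ ω, Real.exp (t * X j ω) ∂P = Real.exp (v * t ^ 2 / 2) := fun t => by
    have h := mgf_gaussianReal hv t
    simpa [mgf] using h
  have hp := hint 1
  have hn := hint (-1)
  have mp := hmgf 1
  have mn := hmgf (-1)
  simp only [one_mul, neg_mul, one_pow, even_two, Even.neg_pow, mul_one] at hp hn mp mn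
  refine ⟨hp.add hn, ?_⟩
  rw [integral_add hp hn, mp, mn, ← two_mul]
  rw [hvar] at hL
  gcongr

/-- The coefficient `tⁿ e^{-a t² / 2}` of the `n`-th Wick power in `hFun`, up to a constant. -/
def powGauss (n : ℕ) (a t : ℝ) : ℂ :=
  (t : ℂ) ^ n * Complex.exp (((-(a * t ^ 2) / 2 : ℝ) : ℂ))

lemma contDiff_powGauss (n : ℕ) (a : ℝ) (k : ℕ) : ContDiff ℝ k (powGauss n a) := by
  have h : ContDiff ℝ k (fun t : ℝ => (t : ℂ)) := Complex.ofRealCLM.contDiff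
  have h2 : ContDiff ℝ k (fun t : ℝ => ((-(a * t ^ 2) / 2 : ℝ) : ℂ)) :=
    Complex.ofRealCLM.contDiff.comp (by fun_prop : ContDiff ℝ k fun t : ℝ => -(a * t ^ 2) / 2)
  exact (h.pow n).mul h2.cexp

lemma deriv_powGauss (n : ℕ) (a : ℝ) :
    deriv (powGauss n a) =
      fun t => (n : ℂ) * powGauss (n - 1) a t + (-a : ℂ) * powGauss (n + 1) a t := by
  funext t
  have h1 : HasDerivAt (fun t : ℝ => (t : ℂ)) 1 t := (hasDerivAt_id t).ofReal_comp
  have h2 : HasDerivAt (fun t : ℝ => ((-(a * t ^ 2) / 2 : ℝ) : ℂ)) ((-(a * t) : ℝ) : ℂ) t := by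
    refine HasDerivAt.ofReal_comp ?_
    have h := (((hasDerivAt_pow 2 t).const_mul a).neg.div_const 2)
    refine h.congr_deriv ?_
    norm_num
    ring
  have h3 := (h1.pow n).mul h2.cexp
  refine (h3.deriv).trans ?_
  simp only [powGauss, Pi.pow_apply]
  push_cast
  ring

lemma exists_norm_powGauss_le {L : ℝ} (hL : 0 < L) (n : ℕ) :
    ∃ B ≥ 0, ∀ a ∈ Set.Icc L⁻¹ L, ∀ t : ℝ, ‖powGauss n a t‖ ≤ B := by
  refine ⟨1 + n.factorial * (2 * L) ^ n, by positivity, fun a ha t => ?_⟩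
  have ha0 : 0 < a := (inv_pos.2 hL).trans_le ha.1
  rw [powGauss, norm_mul, norm_pow, Complex.norm_real, Complex.norm_exp_ofReal, Real.norm_eq_abs]
  set E := Real.exp (-(a * t ^ 2) / 2)
  have hE1 : E ≤ 1 := Real.exp_le_one_iff.2 (by nlinarith [sq_nonneg t])
  have hE0 : 0 < E := Real.exp_pos _
  have hpow : |t| ^ n ≤ 1 + (t ^ 2) ^ n := by
    have h : (t ^ 2) ^ n = (|t| ^ n) ^ 2 := by rw [← sq_abs]; ring
    rw [h]
    nlinarith [sq_nonneg (|t| ^ n - 1), sq_nonneg (|t| ^ n)]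
  have hexp : (t ^ 2) ^ n * E ≤ n.factorial * (2 * L) ^ n := by
    have h := Real.pow_div_factorial_le_exp (t ^ 2 / (2 * L)) (by positivity) n
    have h' : Real.exp (t ^ 2 / (2 * L)) * E ≤ 1 := by
      rw [← Real.exp_add, Real.exp_le_one_iff]
      have : L⁻¹ * t ^ 2 ≤ a * t ^ 2 := by gcongr; exact ha.1
      have e : t ^ 2 / (2 * L) = L⁻¹ * t ^ 2 / 2 := by field_simp
      rw [e]; linarith
    have h4 := (mul_le_mul_of_nonneg_right h hE0.le).trans h'
    rw [div_pow, div_div, div_mul_eq_mul_div, div_le_one (by positivity)] at h4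
    linarith
  calc |t| ^ n * E ≤ (1 + (t ^ 2) ^ n) * E := by gcongr
    _ ≤ _ := by linarith

lemma exists_norm_iteratedDeriv_powGauss_le {L : ℝ} (hL : 0 < L) (r n : ℕ) :
    ∃ B ≥ 0, ∀ a ∈ Set.Icc L⁻¹ L, ∀ t : ℝ, ‖iteratedDeriv r (powGauss n a) t‖ ≤ B := by
  induction r generalizing n with
  | zero => simpa using exists_norm_powGauss_le hL n
  | succ r ih =>
    obtain ⟨B₁, hB₁, h₁⟩ := ih (n - 1)
    obtain ⟨B₂, hB₂, h₂⟩ := ih (n + 1)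
    refine ⟨n * B₁ + L * B₂, by positivity, fun a ha t => ?_⟩
    have ha0 : 0 < a := (inv_pos.2 hL).trans_le ha.1
    have c₁ := (contDiff_powGauss (n - 1) a r).contDiffAt (x := t)
    have c₂ := (contDiff_powGauss (n + 1) a r).contDiffAt (x := t)
    rw [iteratedDeriv_succ', deriv_powGauss,
      iteratedDeriv_fun_add (contDiffAt_const.mul c₁) (contDiffAt_const.mul c₂),
      iteratedDeriv_const_mul_field, iteratedDeriv_const_mul_field]
    refine (norm_add_le _ _).trans ?_
    rw [norm_mul, norm_mul, norm_neg, Complex.norm_natCast, Complex.norm_real,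
      Real.norm_of_nonneg ha0.le]
    gcongr
    · exact h₁ a ha t
    · exact ha.2
    · exact h₂ a ha t

lemma exists_abs_aeval_le (p : Polynomial ℤ) :
    ∃ B ≥ 0, ∀ y : ℝ, |Polynomial.aeval y p| ≤ B * (1 + |y|) ^ p.natDegree := by
  refine ⟨∑ i ∈ Finset.range (p.natDegree + 1), |(p.coeff i : ℝ)|, by positivity, fun y => ?_⟩
  rw [Polynomial.aeval_eq_sum_range, Finset.sum_mul]
  refine (Finset.abs_sum_le_sum_abs _ _).trans (Finset.sum_le_sum fun i hi => ?_)
  rw [zsmul_eq_mul, abs_mul, abs_pow]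
  gcongr
  calc |y| ^ i ≤ (1 + |y|) ^ i := by gcongr; linarith
    _ ≤ _ := pow_le_pow_right₀ (by linarith [abs_nonneg y])
      (Nat.lt_succ_iff.1 (Finset.mem_range.1 hi))

lemma exists_abs_wick_le {L : ℝ} (hL : 1 < L) (n : ℕ) :
    ∃ B ≥ 0, ∀ a ∈ Set.Icc L⁻¹ L, ∀ x : ℝ, |wick a n x| ≤ B * (1 + |x|) ^ n := by
  obtain ⟨B, hB, h⟩ := exists_abs_aeval_le (Polynomial.hermite n)
  rw [Polynomial.natDegree_hermite] at h
  refine ⟨L ^ n * (B * L ^ n), by positivity, fun a ha x => ?_⟩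
  have hL0 : 0 < L := by linarith
  have hs : √a ≤ L := Real.sqrt_le_iff.2 ⟨hL0.le, by nlinarith [ha.2]⟩
  have hs' : L⁻¹ ≤ √a := Real.le_sqrt_of_sq_le (by
    have : L⁻¹ < 1 := inv_lt_one_of_one_lt₀ hL
    nlinarith [ha.1, inv_pos.2 hL0])
  have hs0 : 0 < √a := (inv_pos.2 hL0).trans_le hs'
  have hy : 1 + |x / √a| ≤ L * (1 + |x|) := by
    have : |x / √a| ≤ L * |x| := by
      rw [abs_div, abs_of_pos hs0, div_eq_mul_inv, mul_comm]
      gcongr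
      exact inv_le_of_inv_le₀ hL0 hs'
    linarith
  rw [wick, abs_mul, abs_pow, abs_of_pos hs0]
  calc √a ^ n * |Polynomial.aeval (x / √a) (Polynomial.hermite n)|
      ≤ L ^ n * (B * (L * (1 + |x|)) ^ n) := by
        gcongr
        exact (h _).trans (by gcongr)
    _ = _ := by rw [mul_pow]; ring

lemma contDiff_cexp_I_mul (x : ℝ) (k : ℕ) :
    ContDiff ℝ k fun t : ℝ => Complex.exp (Complex.I * t * x) := by
  have h : ContDiff ℝ k (fun t : ℝ => (t : ℂ)) := Complex.ofRealCLM.contDiff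
  exact ((contDiff_const.mul h).mul contDiff_const).cexp

lemma norm_iteratedDeriv_cexp_I_mul (r : ℕ) (x t : ℝ) :
    ‖iteratedDeriv r (fun t : ℝ => Complex.exp (Complex.I * t * x)) t‖ = |x| ^ r := by
  have hd : deriv (fun t : ℝ => Complex.exp (Complex.I * t * x)) =
      fun t : ℝ => (Complex.I * x) * Complex.exp (Complex.I * t * x) := by
    funext t
    have h1 : HasDerivAt (fun t : ℝ => (t : ℂ)) 1 t := (hasDerivAt_id t).ofReal_comp
    have h2 := ((h1.const_mul Complex.I).mul_const (x : ℂ)).cexp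
    rw [h2.deriv]
    ring
  induction r with
  | zero =>
    have : Complex.I * t * x = ((t * x : ℝ) : ℂ) * Complex.I := by push_cast; ring
    rw [iteratedDeriv_zero, this, Complex.norm_exp_ofReal_mul_I, pow_zero]
  | succ r ih =>
    rw [iteratedDeriv_succ', hd, iteratedDeriv_const_mul_field, norm_mul, ih]
    simp [pow_succ']

/-- The `r`-th `θ`-derivative of `hFun` grows at most polynomially in `x`, uniformly in `θ` and
in the variance. -/
lemma exists_norm_iteratedDeriv_hFun_le (m r : ℕ) {L : ℝ} (hL : 1 < L) :
    ∃ A > 0, ∀ a ∈ Set.Icc L⁻¹ L, ∀ x t : ℝ,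
      ‖iteratedDeriv r (fun t => hFun m t x a) t‖ ≤ A * (1 + |x|) ^ (m + r) := by
  have hL0 : 0 < L := by linarith
  choose B hB0 hB using exists_norm_iteratedDeriv_powGauss_le hL0 r
  choose W hW0 hW using exists_abs_wick_le hL
  refine ⟨1 + ∑ n ∈ Finset.range m, W n * B n, ?_, fun a ha x t => ?_⟩
  · have : 0 ≤ ∑ n ∈ Finset.range m, W n * B n :=
      Finset.sum_nonneg fun n _ => mul_nonneg (hW0 n) (hB0 n)
    linarith
  have hx : 1 ≤ 1 + |x| := by linarith [abs_nonneg x]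
  have hfun : (fun t => hFun m t x a) = fun t : ℝ => Complex.exp (Complex.I * t * x) -
      ∑ n ∈ Finset.range m,
        (Complex.I ^ n / (n.factorial : ℂ) * ((wick a n x : ℝ) : ℂ)) * powGauss n a t := by
    funext t
    rw [hFun]
    congr 1
    refine Finset.sum_congr rfl fun n _ => ?_
    rw [powGauss]
    ring
  have hc : ∀ n ∈ Finset.range m, ContDiffAt ℝ r (fun t =>
      (Complex.I ^ n / (n.factorial : ℂ) * ((wick a n x : ℝ) : ℂ)) * powGauss n a t) t :=
    fun n _ => contDiffAt_const.mul (contDiff_powGauss n a r).contDiffAt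
  rw [hfun, iteratedDeriv_fun_sub (contDiff_cexp_I_mul x r).contDiffAt (ContDiffAt.sum hc),
    iteratedDeriv_fun_sum hc]
  refine (norm_sub_le _ _).trans ?_
  rw [norm_iteratedDeriv_cexp_I_mul, add_mul, one_mul, Finset.sum_mul]
  refine add_le_add ?_ ((norm_sum_le _ _).trans (Finset.sum_le_sum fun n hn => ?_))
  · calc |x| ^ r ≤ (1 + |x|) ^ r := by gcongr; linarith
      _ ≤ _ := pow_le_pow_right₀ hx (by omega)
  rw [iteratedDeriv_const_mul_field, norm_mul, norm_mul, norm_div, norm_pow, Complex.norm_I,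
    one_pow, Complex.norm_natCast, Complex.norm_real, Real.norm_eq_abs]
  have hfac : 1 / (n.factorial : ℝ) ≤ 1 :=
    div_le_one_of_le₀ (by exact_mod_cast n.factorial_pos) (by positivity)
  have hWn := hW0 n
  calc 1 / (n.factorial : ℝ) * |wick a n x| * ‖iteratedDeriv r (powGauss n a) t‖
      ≤ 1 * (W n * (1 + |x|) ^ (m + r)) * B n := by
        gcongr
        · refine (hW n a ha x).trans ?_
          gcongr
          · have := Finset.mem_range.1 hn
            omega
        · exact hB n a ha t
    _ = W n * B n * (1 + |x|) ^ (m + r) := by ring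

/-- bound (2.6): for centered jointly Gaussian `X₁,…,X_K` with variances in
`[Λ⁻¹, Λ]`, `|E ∏_j ∂_θ^r 𝓗_m(e^{iθX_j})| ≤ C` uniformly in `θ`. -/
theorem stmt3 (K : ℕ) (hK : 1 ≤ K) (m r : ℕ) (Λ : ℝ) (hΛ : 1 < Λ) :
    ∃ C > 0,
      ∀ (Ω : Type) (_ : MeasurableSpace Ω) (P : Measure Ω), IsProbabilityMeasure P →
      ∀ X : Fin K → Ω → ℝ, IsCenteredGaussianFamily P X →
        (∀ j, (∫ ω, X j ω ^ 2 ∂P) ∈ Set.Icc Λ⁻¹ Λ) →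
        ∀ θ : ℝ,
          ‖∫ ω, ∏ j, iteratedDeriv r
              (fun t => hFun m t (X j ω) (∫ ω', X j ω' ^ 2 ∂P)) θ ∂P‖ ≤ C := by
  have hΛ0 : 0 < Λ := by linarith
  obtain ⟨A, hA0, hA⟩ := exists_norm_iteratedDeriv_hFun_le m r hΛ
  set M := (m + r) * K with hM
  set D := A ^ K * (M.factorial * Real.exp 1) with hD
  have hD0 : 0 ≤ D := by positivity
  refine ⟨D * (K * (2 * Real.exp (Λ / 2))) + 1, by positivity, ?_⟩
  intro Ω _ P _ X hX hvar θ
  have hmom := fun j => integrable_exp_and_integral_le hX j (hvar j).2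
  have hbd : ‖∫ ω, ∏ j, iteratedDeriv r
      (fun t => hFun m t (X j ω) (∫ ω', X j ω' ^ 2 ∂P)) θ ∂P‖ ≤
      ∫ ω, D * ∑ j, (Real.exp (X j ω) + Real.exp (-X j ω)) ∂P := by
    refine norm_integral_le_of_norm_le
      ((integrable_finsetSum _ fun j _ => (hmom j).1).const_mul D) (ae_of_all _ fun ω => ?_)
    rw [norm_prod]
    calc ∏ j, ‖iteratedDeriv r (fun t => hFun m t (X j ω) (∫ ω', X j ω' ^ 2 ∂P)) θ‖
        ≤ ∏ j, A * (1 + |X j ω|) ^ (m + r) :=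
          Finset.prod_le_prod (fun _ _ => norm_nonneg _) fun j _ => hA _ (hvar j) _ _
      _ = A ^ K * ∏ j, (1 + |X j ω|) ^ (m + r) := by
          rw [Finset.prod_mul_distrib]; simp
      _ ≤ A ^ K * ∑ j, ((1 + |X j ω|) ^ (m + r)) ^ K := by
          gcongr
          exact prod_le_sum_pow hK fun j => by positivity
      _ ≤ A ^ K * ∑ j, (M.factorial * Real.exp 1) *
            (Real.exp (X j ω) + Real.exp (-X j ω)) := by
          gcongr with j
          rw [← pow_mul]
          exact one_add_abs_pow_le _ _
      _ = D * ∑ j, (Real.exp (X j ω) + Real.exp (-X j ω)) := by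
          rw [← Finset.mul_sum, hD]; ring
  refine hbd.trans ?_
  rw [integral_const_mul, integral_finsetSum _ fun j _ => (hmom j).1]
  have hsum : ∑ j, ∫ ω, (Real.exp (X j ω) + Real.exp (-X j ω)) ∂P ≤
      K * (2 * Real.exp (Λ / 2)) := by
    refine (Finset.sum_le_sum fun j _ => (hmom j).2).trans (le_of_eq ?_)
    simp
  linarith [mul_le_mul_of_nonneg_left hsum hD0]
end
end

section
/- Let (X₁, …, X_K) be centered jointly Gaussian real random variables with strictly positive variances and with E(X_i X_j) ≥ 0 for all i ≠ j. Let n₁, …, n_K ∈ ℕ, and let 𝓔 be any multiplicity function on unordered pairs {i,j} ⊆ {1,…,K} with i ≠ j (no self-loops) such that Σ_{j≠i} 𝓔(i,j) = n_i for every i. Then ∏_{i<j} (E(X_i X_j))^{𝓔(i,j)} ≤ E ∏_{i=1}^{K} X_i^{⋄n_i}. In particular the right-hand side is nonnegative. -/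
open MeasureTheory ProbabilityTheory Filter

noncomputable section

def pairs (K : ℕ) : Finset (Fin K × Fin K) :=
  Finset.univ.filter fun p => p.1 < p.2

section Recursion

variable {K : ℕ} {C : Fin K → Fin K → ℝ} {E : (Fin K → ℕ) → ℝ}

/-- `E` satisfies the Wick contraction rule with covariances `C`: one factor of index `i` is
contracted with every factor of another index `j`. -/
def SatisfiesContraction (C : Fin K → Fin K → ℝ) (E : (Fin K → ℕ) → ℝ) : Prop :=
  ∀ (n : Fin K → ℕ) (i : Fin K), E (n + Pi.single i 1) =
    ∑ j ∈ Finset.univ.erase i, C i j * (n j * E (n - Pi.single j 1))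

lemma SatisfiesContraction.nonneg (hE : SatisfiesContraction C E)
    (hC : ∀ i j, i ≠ j → 0 ≤ C i j) (hE0 : E 0 = 1) (n : Fin K → ℕ) : 0 ≤ E n := by
  induction hm : ∑ i, n i using Nat.strong_induction_on generalizing n with
  | _ m ih =>
  by_cases hn : n = 0
  · simp [hn, hE0]
  obtain ⟨i, hi⟩ : ∃ i, n i ≠ 0 := by
    by_contra! h
    exact hn (funext h)
  have hle : Pi.single i 1 ≤ n := by
    intro k
    by_cases hk : k = i
    · subst hk; simpa using Nat.one_le_iff_ne_zero.mpr hi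
    · simp [hk]
  have hsum : ∑ k, (n - Pi.single i 1 : Fin K → ℕ) k < m := by
    rw [← hm]
    refine Finset.sum_lt_sum (fun k _ => Nat.sub_le _ _) ⟨i, Finset.mem_univ i, ?_⟩
    simp only [Pi.sub_apply, Pi.single_eq_same]
    omega
  rw [← tsub_add_cancel_of_le hle, hE]
  refine Finset.sum_nonneg fun j hj => mul_nonneg (hC i j (Finset.ne_of_mem_erase hj).symm)
    (mul_nonneg (Nat.cast_nonneg _) (ih _ ?_ _ rfl))
  exact (Finset.sum_le_sum fun k _ => Nat.sub_le _ _).trans_lt hsum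

lemma SatisfiesContraction.mul_le (hE : SatisfiesContraction C E)
    (hC : ∀ i j, i ≠ j → 0 ≤ C i j) (hE0 : E 0 = 1) (n : Fin K → ℕ) {i j : Fin K} (hij : i ≠ j) :
    C i j * E n ≤ E (n + Pi.single j 1 + Pi.single i 1) := by
  have hnn := hE.nonneg hC hE0
  rw [hE]
  refine le_trans ?_ (Finset.single_le_sum (fun k hk => ?_)
    (Finset.mem_erase.mpr ⟨hij.symm, Finset.mem_univ j⟩))
  · rw [add_tsub_cancel_right]
    refine mul_le_mul_of_nonneg_left (le_mul_of_one_le_left (hnn n) ?_) (hC i j hij)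
    simp
  · exact mul_nonneg (hC i k (Finset.ne_of_mem_erase hk).symm)
      (mul_nonneg (Nat.cast_nonneg _) (hnn _))

lemma SatisfiesContraction.prod_pow_le (hE : SatisfiesContraction C E)
    (hC : ∀ i j, i ≠ j → 0 ≤ C i j) (hE0 : E 0 = 1) (n : Fin K → ℕ) (𝓔 : Fin K → Fin K → ℕ)
    (hsymm : ∀ i j, 𝓔 i j = 𝓔 j i) (hdiag : ∀ i, 𝓔 i i = 0) (hdeg : ∀ i, ∑ j, 𝓔 i j = n i) :
    ∏ p ∈ pairs K, C p.1 p.2 ^ 𝓔 p.1 p.2 ≤ E n := by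
  induction hm : ∑ i, n i using Nat.strong_induction_on generalizing n 𝓔 with
  | _ m ih =>
  by_cases hzero : ∀ i j, i < j → 𝓔 i j = 0
  · have h𝓔 : ∀ i j, 𝓔 i j = 0 := fun i j => by
      rcases lt_trichotomy i j with h | rfl | h
      · exact hzero i j h
      · exact hdiag i
      · rw [hsymm]; exact hzero j i h
    have hn : n = 0 := funext fun i => by simp [← hdeg i, h𝓔]
    simp [h𝓔, hn, hE0]
  push Not at hzero
  obtain ⟨i, j, hij, hpos⟩ := hzero
  let D : Fin K → Fin K → ℕ := fun a b =>
    (if a = i then if b = j then 1 else 0 else 0) + (if a = j then if b = i then 1 else 0 else 0)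
  have hpos' : 𝓔 j i ≠ 0 := by rwa [hsymm]
  have hD : ∀ a b, 𝓔 a b - D a b + D a b = 𝓔 a b := fun a b => by
    refine Nat.sub_add_cancel ?_
    simp only [D]
    split_ifs <;> subst_vars <;> omega
  have hDsum : ∀ a, ∑ b, D a b = (Pi.single j 1 + Pi.single i 1 : Fin K → ℕ) a := fun a => by
    simp only [D, Finset.sum_add_distrib, Pi.add_apply, Pi.single_apply]
    split_ifs <;> simp
  have hn : n = (fun a => ∑ b, (𝓔 a b - D a b)) + Pi.single j 1 + Pi.single i 1 := by
    funext a
    rw [add_assoc, Pi.add_apply, ← hDsum, ← Finset.sum_add_distrib, ← hdeg]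
    exact Finset.sum_congr rfl fun b _ => (hD a b).symm
  have hprod : ∏ p ∈ pairs K, C p.1 p.2 ^ 𝓔 p.1 p.2 =
      C i j * ∏ p ∈ pairs K, C p.1 p.2 ^ (𝓔 p.1 p.2 - D p.1 p.2) := by
    have hC' : C i j = ∏ p ∈ pairs K, C p.1 p.2 ^ D p.1 p.2 := by
      rw [Finset.prod_eq_single (i, j)]
      · simp [D, hij.ne]
      · rintro ⟨a, b⟩ hab hne
        have hab' : a < b := by simpa [pairs] using hab
        have : D a b = 0 := by
          simp only [D]
          split_ifs <;> subst_vars <;> first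
            | rfl | (exact absurd rfl hne) | (exact absurd hab' hij.not_gt)
        simp [this]
      · simp [pairs, hij]
    rw [hC', ← Finset.prod_mul_distrib]
    refine Finset.prod_congr rfl fun p _ => ?_
    rw [← pow_add, add_comm, hD]
  rw [hprod, hn]
  refine (mul_le_mul_of_nonneg_left (ih _ ?_ _ (fun a b => 𝓔 a b - D a b) (fun a b => ?_)
    (fun a => ?_) (fun a => rfl) rfl) (hC i j hij.ne)).trans (hE.mul_le hC hE0 _ hij.ne)
  · rw [← hm]
    conv_rhs => rw [hn]
    simp [Finset.sum_add_distrib]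
  · have : D a b = D b a := by
      simp only [D]
      split_ifs <;> rfl
    rw [hsymm, this]
  · simp [hdiag]

end Recursion

section WickPolynomial

open Polynomial

/-- The Wick power `X^{⋄n}` of a Gaussian variable of variance `v`, as a polynomial. -/
def wickPoly (v : ℝ) : ℕ → ℝ[X]
  | 0 => 1
  | n + 1 => X * wickPoly v n - C v * derivative (wickPoly v n)

lemma derivative_wickPoly_succ (v : ℝ) (n : ℕ) :
    derivative (wickPoly v (n + 1)) = (n + 1 : ℝ[X]) * wickPoly v n := by
  induction n with
  | zero => simp [wickPoly]
  | succ n ih =>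
    rw [wickPoly, derivative_sub, derivative_mul, derivative_C_mul, ih, derivative_X]
    have h : derivative ((n + 1 : ℝ[X]) * wickPoly v n) =
        (n + 1 : ℝ[X]) * derivative (wickPoly v n) := by
      simp [derivative_mul]
    rw [h, Nat.cast_succ, show wickPoly v (n + 1) = X * wickPoly v n -
      C v * derivative (wickPoly v n) from rfl]
    ring

lemma derivative_wickPoly (v : ℝ) (n : ℕ) :
    derivative (wickPoly v n) = (n : ℝ[X]) * wickPoly v (n - 1) := by
  cases n with
  | zero => simp [wickPoly]
  | succ n => simpa using derivative_wickPoly_succ v n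

lemma wickPoly_sq_eq_comp_hermite {s : ℝ} (hs : s ≠ 0) (n : ℕ) :
    wickPoly (s ^ 2) n =
      C (s ^ n) * ((hermite n).map (Int.castRingHom ℝ)).comp (C s⁻¹ * X) := by
  induction n with
  | zero => simp [wickPoly]
  | succ n ih =>
    have h : (C s * C s⁻¹ : ℝ[X]) = 1 := by rw [← C_mul, mul_inv_cancel₀ hs, C_1]
    rw [wickPoly, ih, hermite_succ]
    rw [derivative_C_mul, derivative_comp]
    simp only [derivative_C_mul, Polynomial.map_sub,
      Polynomial.map_mul, map_X, sub_comp, mul_comp, X_comp, derivative_X, derivative_map,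
      C_pow, mul_one]
    linear_combination (-(C s ^ n * X * ((hermite n).map (Int.castRingHom ℝ)).comp (C s⁻¹ * X))
      - C s ^ (n + 1) *
        ((derivative (hermite n)).map (Int.castRingHom ℝ)).comp (C s⁻¹ * X)) * h

lemma wick_eq_eval_wickPoly {v : ℝ} (hv : 0 < v) (n : ℕ) (x : ℝ) :
    wick v n x = (wickPoly v n).eval x := by
  have hs : Real.sqrt v ≠ 0 := (Real.sqrt_pos.mpr hv).ne'
  conv_rhs => rw [← Real.sq_sqrt hv.le, wickPoly_sq_eq_comp_hermite hs]
  simp [wick, eval_comp, aeval_def, eval₂_eq_eval_map, div_eq_inv_mul]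

end WickPolynomial

section Integrability

variable {Ω : Type*} [MeasurableSpace Ω] {P : Measure Ω}

lemma memLp_mul_of_forall {f g : Ω → ℝ} (hf : ∀ p : NNReal, MemLp f p P)
    (hg : ∀ p : NNReal, MemLp g p P) (p : NNReal) : MemLp (fun ω => f ω * g ω) p P := by
  have h : ENNReal.HolderTriple ((2 * p : NNReal) : ENNReal) ((2 * p : NNReal) : ENNReal) p := by
    constructor
    rw [ENNReal.coe_mul, ENNReal.mul_inv (by simp) (by simp), ← add_mul]
    simp [ENNReal.inv_two_add_inv_two]
  exact (hg (2 * p)).mul' (hf (2 * p))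

lemma memLp_prod_of_forall [IsProbabilityMeasure P] {ι : Type*} {f : ι → Ω → ℝ} (s : Finset ι)
    (hf : ∀ i ∈ s, ∀ p : NNReal, MemLp (f i) p P) (p : NNReal) :
    MemLp (fun ω => ∏ i ∈ s, f i ω) p P := by
  induction s using Finset.cons_induction generalizing p with
  | empty => simpa using memLp_const (1 : ℝ)
  | cons i s hi ih =>
    simp only [Finset.prod_cons]
    exact memLp_mul_of_forall (hf i (Finset.mem_cons_self i s))
      (ih fun j hj => hf j (Finset.mem_cons_of_mem hj)) p

lemma memLp_polynomial_eval_of_forall [IsProbabilityMeasure P] {Y : Ω → ℝ}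
    (hY : ∀ p : NNReal, MemLp Y p P) (q : Polynomial ℝ) (p : NNReal) :
    MemLp (fun ω => q.eval (Y ω)) p P := by
  induction q using Polynomial.induction_on generalizing p with
  | C a => simpa using memLp_const a
  | add q r hq hr => simpa [Pi.add_def] using! (hq p).add (hr p)
  | monomial n a h =>
    simpa [pow_succ, mul_assoc] using memLp_mul_of_forall h hY p

end Integrability

section Stein

open Polynomial

lemma hasDerivAt_gaussianPDFReal_zero (v : NNReal) (x : ℝ) :
    HasDerivAt (gaussianPDFReal 0 v) (-(x / v) * gaussianPDFReal 0 v x) x := by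
  have h : HasDerivAt (fun y : ℝ => -(y - 0) ^ 2 / (2 * v)) (-(x / v)) x := by
    have := (((hasDerivAt_id x).sub_const 0).pow 2).neg.div_const (2 * (v : ℝ))
    refine this.congr_deriv ?_
    simp [neg_div, mul_div_mul_left]
  have := h.exp.const_mul (√(2 * Real.pi * v))⁻¹
  refine this.congr_deriv ?_
  simp only [gaussianPDFReal]
  ring

lemma integrable_polynomial_mul_gaussianPDFReal {v : NNReal} (hv : v ≠ 0) (q : ℝ[X]) :
    Integrable (fun x => q.eval x * gaussianPDFReal 0 v x) := by
  have h : Integrable (fun x => q.eval x) (gaussianReal 0 v) :=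
    memLp_one_iff_integrable.mp
      (memLp_polynomial_eval_of_forall (fun p => memLp_id_gaussianReal p) q 1)
  rw [gaussianReal_of_var_ne_zero _ hv, integrable_withDensity_iff_integrable_smul'
    (measurable_gaussianPDF _ _) (ae_of_all _ fun _ => gaussianPDF_lt_top)] at h
  simpa [toReal_gaussianPDF, mul_comm] using h

/-- **Gaussian integration by parts** for polynomials in one variable. -/
lemma integral_mul_polynomial_gaussianReal {v : NNReal} (hv : v ≠ 0) (q : ℝ[X]) :
    ∫ x, x * q.eval x ∂gaussianReal 0 v = v * ∫ x, (derivative q).eval x ∂gaussianReal 0 v := by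
  have hv' : (v : ℝ) ≠ 0 := by exact_mod_cast hv
  have h := integral_mul_deriv_eq_deriv_mul_of_integrable (u := fun x => q.eval x)
    (u' := fun x => (derivative q).eval x) (v := gaussianPDFReal 0 v)
    (v' := fun x => -(x / v) * gaussianPDFReal 0 v x)
    (fun x _ => q.hasDerivAt x) (fun x _ => hasDerivAt_gaussianPDFReal_zero v x)
    ((integrable_polynomial_mul_gaussianPDFReal hv (q * (C (-(v : ℝ)⁻¹) * X))).congr
      (ae_of_all _ fun x => by simp; ring))
    (integrable_polynomial_mul_gaussianPDFReal hv _)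
    (integrable_polynomial_mul_gaussianPDFReal hv q)
  rw [integral_gaussianReal_eq_integral_smul hv, integral_gaussianReal_eq_integral_smul hv]
  simp only [smul_eq_mul, mul_comm (gaussianPDFReal 0 v _) (eval _ _)]
  rw [← neg_eq_iff_eq_neg.mpr h, ← integral_neg, ← integral_const_mul]
  congr 1 with x
  field_simp

end Stein

section JointlyGaussian

open Polynomial

variable {ι Ω : Type*} [MeasurableSpace Ω] {P : Measure Ω}

lemma IsCenteredGaussianFamily.aemeasurable {X : ι → Ω → ℝ}
    (hX : IsCenteredGaussianFamily P X) (i : ι) : AEMeasurable (X i) P := by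
  obtain ⟨v, hv⟩ := hX {i} 1
  have : P.map (X i) = gaussianReal 0 v := by simpa using hv
  refine AEMeasurable.of_map_ne_zero ?_
  rw [this]
  exact IsProbabilityMeasure.ne_zero _

lemma IsCenteredGaussianFamily.integral_eq_zero {X : ι → Ω → ℝ}
    (hX : IsCenteredGaussianFamily P X) (i : ι) : ∫ ω, X i ω ∂P = 0 := by
  obtain ⟨v, hv⟩ := hX {i} 1
  have hmap : P.map (X i) = gaussianReal 0 v := by simpa using hv
  have h : ∫ x, x ∂(P.map (X i)) = ∫ ω, X i ω ∂P :=
    integral_map (hX.aemeasurable i) aestronglyMeasurable_id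
  rw [← h, hmap, integral_id_gaussianReal]

lemma IsCenteredGaussianFamily.hasGaussianLaw [Fintype ι] {X : ι → Ω → ℝ}
    (hX : IsCenteredGaussianFamily P X) : HasGaussianLaw (fun ω => (X · ω)) P where
  isGaussian_map := by
    classical
    refine isGaussian_of_map_eq_gaussianReal fun L => ?_
    obtain ⟨v, hv⟩ := hX Finset.univ fun i => L (Pi.single i 1)
    refine ⟨0, v, ?_⟩
    rw [← hv, AEMeasurable.map_map_of_aemeasurable (by fun_prop)
      (aemeasurable_pi_lambda _ hX.aemeasurable)]
    congr 1 with ω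
    rw [Function.comp_apply, ← Finset.univ_sum_single (X · ω), map_sum]
    refine Finset.sum_congr rfl fun i _ => ?_
    rw [mul_comm, ← smul_eq_mul, ← map_smul, ← Pi.single_smul, smul_eq_mul, mul_one]

variable {X : ι → Ω → ℝ}

lemma integrable_mul_prod_eval (hX : HasGaussianLaw (fun ω => (X · ω)) P) (i : ι) (q : ι → ℝ[X])
    (r : ℝ[X]) (s : Finset ι) :
    Integrable (fun ω => (∏ k ∈ s, (q k).eval (X k ω)) * r.eval (X i ω)) P := by
  have := hX.isProbabilityMeasure
  have hL (k : ι) (p : NNReal) : MemLp (X k) p P := (hX.eval k).memLp (by simp)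
  exact memLp_one_iff_integrable.mp (memLp_mul_of_forall
    (memLp_prod_of_forall s fun k _ => memLp_polynomial_eval_of_forall (hL k) (q k))
    (memLp_polynomial_eval_of_forall (hL i) r) 1)

/-- Subtracting from a centered Gaussian vector its regression on the `i`-th coordinate leaves a
vector independent of this coordinate. -/
lemma indepFun_regression_residual [Fintype ι] (hX : HasGaussianLaw (fun ω => (X · ω)) P)
    (h0 : ∀ i, ∫ ω, X i ω ∂P = 0) {i : ι} (hi : 0 < ∫ ω, X i ω ^ 2 ∂P) :
    IndepFun (X i) (fun ω j => X j ω -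
      ((∫ ω', X i ω' * X j ω' ∂P) / ∫ ω', X i ω' ^ 2 ∂P) * X i ω) P := by
  have := hX.isProbabilityMeasure
  set a : ι → ℝ := fun j => (∫ ω', X i ω' * X j ω' ∂P) / ∫ ω', X i ω' ^ 2 ∂P with ha
  have hlaw : HasGaussianLaw
      (fun ω => ((fun _ : Unit => X i ω), (fun j => X j ω - a j * X i ω))) P := by
    let π (j : ι) : (ι → ℝ) →L[ℝ] ℝ := ContinuousLinearMap.proj j
    exact hX.map_fun ((ContinuousLinearMap.pi fun _ : Unit => π i).prod
      (ContinuousLinearMap.pi fun j => π j - a j • π i))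
  have hL (k : ι) : MemLp (X k) 2 P := (hX.eval k).memLp_two
  have hind := hlaw.indepFun_of_covariance_eval (X := fun (_ : Unit) ω => X i ω)
    (Y := fun j ω => X j ω - a j * X i ω) fun _ j => by
      rw [covariance_fun_sub_right (hL i) (hL j) ((hL i).const_mul _), covariance_const_mul_right,
        covariance_eq_sub (hL i) (hL j), covariance_eq_sub (hL i) (hL i)]
      simp only [h0, Pi.mul_apply, ← pow_two, ha]
      field_simp
      simp
  exact hind.comp (measurable_pi_apply ()) measurable_id

/-- **Gaussian integration by parts** for products of polynomials in the coordinates of a centered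
Gaussian vector. -/
lemma integral_mul_prod_eval [Fintype ι] [DecidableEq ι] (hX : HasGaussianLaw (fun ω => (X · ω)) P)
    (h0 : ∀ i, ∫ ω, X i ω ∂P = 0) {i : ι} (hi : 0 < ∫ ω, X i ω ^ 2 ∂P) (q : ι → ℝ[X]) :
    ∫ ω, X i ω * ∏ k, (q k).eval (X k ω) ∂P = ∑ j, (∫ ω, X i ω * X j ω ∂P) *
      ∫ ω, (∏ k ∈ Finset.univ.erase j, (q k).eval (X k ω)) *
        (derivative (q j)).eval (X j ω) ∂P := by
  have := hX.isProbabilityMeasure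
  set σ := ∫ ω, X i ω ^ 2 ∂P with hσ
  set c : ι → ℝ := fun j => ∫ ω, X i ω * X j ω ∂P with hc
  set Z : Ω → ι → ℝ := fun ω j => X j ω - c j / σ * X i ω with hZ
  have hind : IndepFun (X i) Z P := indepFun_regression_residual hX h0 hi
  have hXm : AEMeasurable (X i) P := (hX.eval i).aemeasurable
  have hZm : AEMeasurable Z P := aemeasurable_pi_lambda _ fun j =>
    (hX.eval j).aemeasurable.sub (hXm.const_mul _)
  have hprod := (indepFun_iff_map_prod_eq_prod_map_map hXm hZm).mp hind
  have hXZ (j : ι) (ω : Ω) : c j / σ * X i ω + Z ω j = X j ω := by simp [hZ]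
  obtain ⟨v, hv, hlaw⟩ : ∃ v : NNReal, (v : ℝ) = σ ∧ P.map (X i) = gaussianReal 0 v := by
    refine ⟨Var[X i; P].toNNReal, ?_, ?_⟩
    · rw [Real.coe_toNNReal _ (variance_nonneg _ _), variance_of_integral_eq_zero hXm (h0 i)]
    · rw [(hX.eval i).map_eq_gaussianReal, h0 i]
  have hv0 : v ≠ 0 := by
    rintro rfl
    exact hi.ne hv
  let G : ℝ × (ι → ℝ) → ℝ := fun w => w.1 * ∏ k, (q k).eval (c k / σ * w.1 + w.2 k)
  let H : ℝ × (ι → ℝ) → ℝ := fun w => ∑ j, c j *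
    ((∏ k ∈ Finset.univ.erase j, (q k).eval (c k / σ * w.1 + w.2 k)) *
      (derivative (q j)).eval (c j / σ * w.1 + w.2 j))
  have hGc : Continuous G := by fun_prop
  have hHc : Continuous H := by fun_prop
  have hterm (j : ι) : Integrable (fun ω => c j *
      ((∏ k ∈ Finset.univ.erase j, (q k).eval (X k ω)) * (derivative (q j)).eval (X j ω))) P :=
    (integrable_mul_prod_eval hX j q _ _).const_mul _
  have hGi : Integrable (fun ω => G (X i ω, Z ω)) P := by
    simp only [G, hXZ]
    simpa [mul_comm] using integrable_mul_prod_eval hX i q Polynomial.X Finset.univ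
  have hHi : Integrable (fun ω => H (X i ω, Z ω)) P := by
    simp only [H, hXZ]
    exact integrable_finsetSum _ fun j _ => hterm j
  have key (F : ℝ × (ι → ℝ) → ℝ) (hF : Continuous F)
      (hFi : Integrable (fun ω => F (X i ω, Z ω)) P) :
      ∫ ω, F (X i ω, Z ω) ∂P = ∫ z, ∫ x, F (x, z) ∂gaussianReal 0 v ∂P.map Z := by
    have hFm : AEStronglyMeasurable F (P.map fun ω => (X i ω, Z ω)) :=
      hF.aestronglyMeasurable
    have hFi' := (integrable_map_measure hFm (hXm.prodMk hZm)).mpr hFi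
    rw [← integral_map (hXm.prodMk hZm) hFm, hprod, ← hlaw]
    rw [hprod] at hFi'
    have := Measure.isProbabilityMeasure_map hXm (μ := P)
    have := Measure.isProbabilityMeasure_map hZm (μ := P)
    exact integral_prod_symm F hFi'
  have hGH : ∫ ω, G (X i ω, Z ω) ∂P = ∫ ω, H (X i ω, Z ω) ∂P := by
    rw [key G hGc hGi, key H hHc hHi]
    congr 1 with z
    have h := integral_mul_polynomial_gaussianReal hv0
      (∏ k, (q k).comp (C (c k / σ) * Polynomial.X + C (z k)))
    rw [← integral_const_mul] at h
    simp only [eval_prod, eval_comp, eval_add, eval_mul, eval_C, eval_X, derivative_prod_finset,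
      eval_finsetSum, derivative_comp, derivative_add, derivative_mul, derivative_C,
      derivative_X, hv] at h
    refine h.trans (integral_congr_ae (ae_of_all _ fun x => ?_))
    simp only [H, Finset.mul_sum]
    refine Finset.sum_congr rfl fun j _ => ?_
    have := hi.ne'
    simp only [eval_zero, eval_one]
    linear_combination (c j * (∏ k ∈ Finset.univ.erase j, (q k).eval (c k / σ * x + z k)) *
      (derivative (q j)).eval (c j / σ * x + z j)) * mul_inv_cancel₀ this
  simp only [G, H, hXZ] at hGH
  rw [hGH, integral_finsetSum _ fun j _ => hterm j]
  simp only [integral_const_mul, hc]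

end JointlyGaussian

open Polynomial in
/-- Wick's formula in recursive form. -/
lemma satisfiesContraction_integral_prod_wickPoly {K : ℕ} {Ω : Type*} [MeasurableSpace Ω]
    {P : Measure Ω} {X : Fin K → Ω → ℝ} (hX : HasGaussianLaw (fun ω => (X · ω)) P)
    (h0 : ∀ i, ∫ ω, X i ω ∂P = 0) (hvar : ∀ i, 0 < ∫ ω, X i ω ^ 2 ∂P) :
    SatisfiesContraction (fun i j => ∫ ω, X i ω * X j ω ∂P)
      (fun n => ∫ ω, ∏ i, (wickPoly (∫ ω', X i ω' ^ 2 ∂P) (n i)).eval (X i ω) ∂P) := by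
  intro n i
  set v : Fin K → ℝ := fun i => ∫ ω, X i ω ^ 2 ∂P with hv
  set q : Fin K → ℝ[X] := fun k => wickPoly (v k) (n k) with hq
  have hsplit (ω : Ω) : ∏ k, (wickPoly (v k) ((n + Pi.single i 1 : Fin K → ℕ) k)).eval (X k ω) =
      X i ω * ∏ k, (q k).eval (X k ω) -
        v i * ((∏ k ∈ Finset.univ.erase i, (q k).eval (X k ω)) *
          (derivative (q i)).eval (X i ω)) := by
    rw [← Finset.mul_prod_erase _ _ (Finset.mem_univ i),
      ← Finset.mul_prod_erase _ (fun k => (q k).eval (X k ω)) (Finset.mem_univ i)]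
    have h : ∏ k ∈ Finset.univ.erase i,
          (wickPoly (v k) ((n + Pi.single i 1 : Fin K → ℕ) k)).eval (X k ω) =
        ∏ k ∈ Finset.univ.erase i, (q k).eval (X k ω) :=
      Finset.prod_congr rfl fun k hk => by simp [hq, Finset.ne_of_mem_erase hk]
    rw [h]
    simp only [hq, Pi.add_apply, Pi.single_eq_same, wickPoly, eval_sub, eval_mul, eval_X, eval_C]
    ring
  have hcontract (j : Fin K) (ω : Ω) : (∏ k ∈ Finset.univ.erase j, (q k).eval (X k ω)) *
      (derivative (q j)).eval (X j ω) =
        n j * ∏ k, (wickPoly (v k) ((n - Pi.single j 1 : Fin K → ℕ) k)).eval (X k ω) := by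
    rw [← Finset.mul_prod_erase _ _ (Finset.mem_univ j)]
    have h : ∏ k ∈ Finset.univ.erase j,
          (wickPoly (v k) ((n - Pi.single j 1 : Fin K → ℕ) k)).eval (X k ω) =
        ∏ k ∈ Finset.univ.erase j, (q k).eval (X k ω) :=
      Finset.prod_congr rfl fun k hk => by simp [hq, Finset.ne_of_mem_erase hk]
    rw [h]
    simp only [hq, derivative_wickPoly, Pi.sub_apply, Pi.single_eq_same, eval_mul, eval_natCast]
    ring
  have hint : Integrable (fun ω => X i ω * ∏ k, (q k).eval (X k ω)) P := by
    simpa [mul_comm] using integrable_mul_prod_eval hX i q Polynomial.X Finset.univ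
  change ∫ ω, ∏ k, (wickPoly (v k) ((n + Pi.single i 1 : Fin K → ℕ) k)).eval (X k ω) ∂P = _
  simp only [hsplit]
  rw [integral_sub hint ((integrable_mul_prod_eval hX i q _ _).const_mul _),
    integral_mul_prod_eval hX h0 (hvar i), integral_const_mul,
    ← Finset.add_sum_erase _ _ (Finset.mem_univ i)]
  simp only [hcontract, integral_const_mul, hv, pow_two]
  ring

/-- positivity step from Wick's formula. For jointly Gaussian `X₁,…,X_K`
with nonnegative covariances, any multigraph `𝓔` (no self-loops) realizing the degrees `n_i`
satisfies `∏_{i<j} (E X_i X_j)^{𝓔(i,j)} ≤ E ∏_i X_i^{⋄n_i}`. -/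
theorem stmt4 (K : ℕ) (hK : 1 ≤ K)
    (Ω : Type) [MeasurableSpace Ω] (P : Measure Ω) [IsProbabilityMeasure P]
    (X : Fin K → Ω → ℝ) (hGauss : IsCenteredGaussianFamily P X)
    (hvar : ∀ i, 0 < ∫ ω, X i ω ^ 2 ∂P)
    (hpos : ∀ i j, i ≠ j → 0 ≤ ∫ ω, X i ω * X j ω ∂P)
    (n : Fin K → ℕ) (𝓔 : Fin K → Fin K → ℕ)
    (hsymm : ∀ i j, 𝓔 i j = 𝓔 j i) (hdiag : ∀ i, 𝓔 i i = 0)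
    (hdeg : ∀ i, ∑ j, 𝓔 i j = n i) :
    ∏ p ∈ pairs K, (∫ ω, X p.1 ω * X p.2 ω ∂P) ^ 𝓔 p.1 p.2 ≤
      ∫ ω, ∏ i, wick (∫ ω', X i ω' ^ 2 ∂P) (n i) (X i ω) ∂P := by
  have hX := hGauss.hasGaussianLaw
  simp only [wick_eq_eval_wickPoly (hvar _)]
  exact (satisfiesContraction_integral_prod_wickPoly hX hGauss.integral_eq_zero hvar).prod_pow_le
    hpos (by simp [wickPoly]) n 𝓔 hsymm hdiag hdeg
end
end
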